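/- arXiv:1808.07105 — 5 statements merged into one kernel-verified Lean document; each statement's English description precedes it below -/
import Mathlib

section
/- Let d ≥ 1 and let b : ℝ^d → ℝ^d satisfy Assumptions (A). For the full (untruncated) mirror coupling, i.e. the coupling construction with no truncation of jumps or distances, one has for every h ∈ (0, h₀¹) and all x, y ∈ ℝ^d: 𝔼 f₁(|X' − Y'|) ≤ (1 − c₁·h)·f₁(|x − y|), where f₁, c₁ and h₀¹ are the explicit function and constants defined from L, K, R. -/
open scoped Classical
open MeasureTheory ProbabilityTheory Real

noncomputable section

/-- Standard Gaussian measure `N(0, I)` on `EuclideanSpace ℝ (Fin d)`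
(the `d`-fold product of standard Gaussians `N(0,1)`). -/
def stdGaussian (d : ℕ) : Measure (EuclideanSpace ℝ (Fin d)) :=
  (Measure.pi fun _ : Fin d => gaussianReal 0 1).map
    (MeasurableEquiv.toLp 2 (Fin d → ℝ))

/-- The Gaussian density `φ_{z,hI}` on `ℝ^d`. -/
def gaussDensity (d : ℕ) (h : ℝ) (z u : EuclideanSpace ℝ (Fin d)) : ℝ :=
  (2 * π * h) ^ (-(d : ℝ) / 2) * Real.exp (-‖u - z‖ ^ 2 / (2 * h))

/-- Reflection `R_{x̂,ŷ} u = u - 2⟨e, u⟩e` with `e = (x̂ - ŷ)/‖x̂ - ŷ‖`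
(the identity if `x̂ = ŷ`). -/
def reflect (d : ℕ) (xh yh : EuclideanSpace ℝ (Fin d)) (u : EuclideanSpace ℝ (Fin d)) :
    EuclideanSpace ℝ (Fin d) :=
  if xh = yh then u else
    u - (2 * @inner ℝ _ _ ((‖xh - yh‖)⁻¹ • (xh - yh)) u) • ((‖xh - yh‖)⁻¹ • (xh - yh))

/-- Second component `Y'` of the full (untruncated) mirror coupling, as a function of the
drift-updated points `x̂, ŷ`, the Gaussian input `z` and the uniform input `t`.
The first component is `X' = x̂ + √h • z`. -/
def mirrorY (d : ℕ) (h : ℝ) (xh yh : EuclideanSpace ℝ (Fin d))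
    (z : EuclideanSpace ℝ (Fin d)) (t : ℝ) : EuclideanSpace ℝ (Fin d) :=
  if t ≤ min (gaussDensity d h yh (xh + Real.sqrt h • z))
            (gaussDensity d h xh (xh + Real.sqrt h • z))
          / gaussDensity d h xh (xh + Real.sqrt h • z)
    then xh + Real.sqrt h • z
    else yh + Real.sqrt h • reflect d xh yh z

/-- The standard normal density `φ_{0,1}` on `ℝ`. -/
def stdNormalDensity (u : ℝ) : ℝ := (Real.sqrt (2 * π))⁻¹ * Real.exp (-u ^ 2 / 2)

/-- The constant `c₀`. -/
def c₀ : ℝ :=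
  4 * min (∫ u in Set.Ioo (0:ℝ) (1/2), u ^ 2 * (1 - Real.exp (u - 1/2)) * stdNormalDensity u)
      ((1 - Real.exp (-1)) * ∫ u in Set.Ioo (0:ℝ) (1/2), u ^ 3 * stdNormalDensity u)

/-- `q = 7 L R / c₀`. -/
def qConst (L K R : ℝ) : ℝ := 7 * L * R / c₀

/-- The step-size threshold `h₀¹ = (1/L) min(1/6, K/L, L R²/3, c₀²/(970 L R²))`. -/
def h₀₁ (L K R : ℝ) : ℝ :=
  (1 / L) * min (1/6) (min (K / L) (min (L * R ^ 2 / 3) (c₀ ^ 2 / (970 * (L * R ^ 2)))))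

/-- `r₁¹ = (1 + h₀¹ L) R`. -/
def r₁₁ (L K R : ℝ) : ℝ := (1 + h₀₁ L K R * L) * R

/-- The concave distance function `f₁` built from parameters `q, r₁¹`:
`f₁(r) = (1/q)(1 - e^{-qr})` for `r ≤ r₁¹` and
`f₁(r) = (1/q)(1 - e^{-q r₁¹}) + e^{-q r₁¹}(r - r₁¹)` for `r > r₁¹`. -/
def f₁Dist (q r11 r : ℝ) : ℝ :=
  if r ≤ r11 then (1 / q) * (1 - Real.exp (-q * r))
  else (1 / q) * (1 - Real.exp (-q * r11)) + Real.exp (-q * r11) * (r - r11)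

/-- The contraction constant
`c₁ = min(K/2, (245/(24 c₀)) L² R²) exp(-(49/(6 c₀)) L R²)`. -/
def c₁Const (L K R : ℝ) : ℝ :=
  min (K / 2) (245 / (24 * c₀) * (L ^ 2 * R ^ 2))
    * Real.exp (-((49 / (6 * c₀)) * (L * R ^ 2)))

end

/-!
The distance after one step depends on the noise only through its component along `x̂ - ŷ`.
Conditionally on that component, gluing removes exactly the Gaussian mass which reflection carries
across the mirror, so `𝔼 f(|X' - Y'|)` is the mean of the odd extension of `f` at `ρ + 2√h G`, with
`ρ = |x̂ - ŷ|` and `G` standard normal. Pairing `G` with `-G`, the concavity of `f₁` turns the noise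
into a gain of order `√h · min(ρ, √h)`. For `|x - y| ≤ R` the definition of `q` makes this gain beat
the expansion `ρ ≤ (1 + hL)|x - y|` of a Lipschitz drift; for `|x - y| > R` the noise does no harm
and the contraction of the drift suffices.
-/

/-- The odd extension of `f : [0, ∞) → ℝ` to the line, with value `0` at `0`. It represents the
signed distance under reflection: a mirrored pair that crosses the mirror counts negatively. -/
noncomputable def oddExtension (f : ℝ → ℝ) (r : ℝ) : ℝ := Real.sign r * f |r|

section OddExtension

variable {f : ℝ → ℝ}

lemma oddExtension_neg (f : ℝ → ℝ) (r : ℝ) : oddExtension f (-r) = -oddExtension f r := by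
  simp [oddExtension, Real.sign_neg]

lemma oddExtension_of_nonneg (hf0 : f 0 = 0) {r : ℝ} (hr : 0 ≤ r) : oddExtension f r = f r := by
  rcases hr.eq_or_lt with rfl | hr
  · simp [oddExtension, hf0]
  · rw [oddExtension, Real.sign_of_pos hr, abs_of_pos hr, one_mul]

lemma oddExtension_of_nonpos (hf0 : f 0 = 0) {r : ℝ} (hr : r ≤ 0) :
    oddExtension f r = -f (-r) := by
  rw [← oddExtension_of_nonneg hf0 (neg_nonneg.2 hr), oddExtension_neg, neg_neg]

lemma monotone_oddExtension (hf0 : f 0 = 0) (hf : MonotoneOn f (Set.Ici 0)) :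
    Monotone (oddExtension f) :=
  monotone_of_odd_of_monotoneOn_nonneg (oddExtension_neg f) <|
    hf.congr fun _ hr => (oddExtension_of_nonneg hf0 hr).symm

lemma oddExtension_eq_indicator_sub_indicator (f : ℝ → ℝ) (r : ℝ) : oddExtension f r =
    (Set.Ioi 0).indicator f r - (Set.Ioi 0).indicator f (-r) := by
  rcases lt_trichotomy r 0 with hr | rfl | hr
  · simp [oddExtension, Real.sign_of_neg hr, abs_of_neg hr, hr, hr.le]
  · simp [oddExtension]
  · simp [oddExtension, Real.sign_of_pos hr, abs_of_pos hr, hr, hr.le]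

section Integrability

variable {α : Type*} [MeasurableSpace α] {μ : Measure α} {w : α → ℝ}

lemma integrable_indicator_Ioi_comp (hw : Measurable w) (hf : Integrable (fun a => f |w a|) μ) :
    Integrable (fun a => (Set.Ioi 0).indicator f (w a)) μ := by
  refine (hf.indicator (hw (measurableSet_Ioi (a := 0)))).congr (.of_forall fun a => ?_)
  by_cases ha : 0 < w a
  · simp [ha, abs_of_pos ha]
  · simp [ha]

lemma integrable_oddExtension_comp (hw : Measurable w) (hf : Integrable (fun a => f |w a|) μ) :
    Integrable (fun a => oddExtension f (w a)) μ := by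
  simp only [oddExtension_eq_indicator_sub_indicator]
  exact (integrable_indicator_Ioi_comp hw hf).sub
    (integrable_indicator_Ioi_comp hw.neg (by simpa only [Pi.neg_apply, abs_neg] using hf))

end Integrability

lemma concaveOn_add_le (hf : ConcaveOn ℝ (Set.Ici 0) f) (hf0 : 0 ≤ f 0) {a b : ℝ}
    (ha : 0 ≤ a) (hb : 0 ≤ b) : f (a + b) ≤ f a + f b := by
  rcases (add_nonneg ha hb).eq_or_lt with hab | hab
  · obtain ⟨rfl, rfl⟩ := (add_eq_zero_iff_of_nonneg ha hb).1 hab.symm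
    simpa using hf0
  have chord (c d : ℝ) (hc : 0 ≤ c) (hd : 0 ≤ d) (hcd : c + d = a + b) :
      c / (a + b) * f (a + b) ≤ f c := by
    have h := hf.2 (Set.mem_Ici.2 hab.le) Set.self_mem_Ici (div_nonneg hc hab.le)
      (div_nonneg hd hab.le) (by rw [← add_div, hcd, div_self hab.ne'])
    simp only [smul_eq_mul, mul_zero, add_zero, div_mul_cancel₀ c hab.ne'] at h
    nlinarith [mul_nonneg (div_nonneg hd hab.le) hf0]
  calc f (a + b) = a / (a + b) * f (a + b) + b / (a + b) * f (a + b) := by field_simp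
    _ ≤ f a + f b := add_le_add (chord a b ha hb rfl) (chord b a hb ha (add_comm b a))

lemma concaveOn_add_add_sub_le {s : Set ℝ} (hf : ConcaveOn ℝ s f) {r t : ℝ} (hadd : r + t ∈ s)
    (hsub : r - t ∈ s) : f (r + t) + f (r - t) ≤ 2 * f r := by
  have h := hf.2 hadd hsub one_half_pos.le one_half_pos.le (add_halves 1)
  simp only [smul_eq_mul] at h
  rw [show 1 / 2 * (r + t) + 1 / 2 * (r - t) = r by ring] at h
  linarith

lemma oddExtension_add_add_sub_le (hf : ConcaveOn ℝ (Set.Ici 0) f) (hf0 : f 0 = 0) {r : ℝ}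
    (hr : 0 ≤ r) (t : ℝ) : oddExtension f (r + t) + oddExtension f (r - t) ≤ 2 * f r := by
  wlog ht : 0 ≤ t generalizing t
  · simpa [add_comm, sub_eq_add_neg] using this (-t) (by linarith)
  rw [oddExtension_of_nonneg hf0 (by linarith : 0 ≤ r + t)]
  rcases le_total t r with htr | hrt
  · rw [oddExtension_of_nonneg hf0 (sub_nonneg.2 htr)]
    exact concaveOn_add_add_sub_le hf (add_nonneg hr ht) (sub_nonneg.2 htr)
  · rw [oddExtension_of_nonpos hf0 (sub_nonpos.2 hrt), neg_sub]
    have h₁ := concaveOn_add_le hf hf0.ge ht hr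
    have h₂ := concaveOn_add_le hf hf0.ge (sub_nonneg.2 hrt) hr
    rw [sub_add_cancel] at h₂
    rw [add_comm r t]
    linarith

end OddExtension

/-- The derivative of `f₁Dist q r₁`, constant on `[r₁, ∞)` because `f₁Dist` continues linearly. -/
noncomputable def f₁Slope (q r₁ r : ℝ) : ℝ := Real.exp (-q * min r r₁)

section ConcaveDistance

variable {q r₁ r t : ℝ}

lemma one_sub_exp_le_tangent (hq : 0 < q) (a b : ℝ) :
    1 / q * (1 - Real.exp (-q * b)) ≤
      1 / q * (1 - Real.exp (-q * a)) + Real.exp (-q * a) * (b - a) := by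
  have h : Real.exp (-q * a) * (-q * (b - a) + 1) ≤ Real.exp (-q * b) := by
    calc Real.exp (-q * a) * (-q * (b - a) + 1)
        ≤ Real.exp (-q * a) * Real.exp (-q * (b - a)) := by
          gcongr; exact Real.add_one_le_exp _
      _ = Real.exp (-q * b) := by rw [← Real.exp_add]; ring_nf
  calc 1 / q * (1 - Real.exp (-q * b))
      ≤ 1 / q * (1 - Real.exp (-q * a) * (-q * (b - a) + 1)) := by gcongr
    _ = 1 / q * (1 - Real.exp (-q * a)) + Real.exp (-q * a) * (b - a) := by field_simp; ring

lemma f₁Dist_le_tangent (hq : 0 < q) (r₁ a b : ℝ) :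
    f₁Dist q r₁ b ≤ f₁Dist q r₁ a + f₁Slope q r₁ a * (b - a) := by
  unfold f₁Dist f₁Slope
  split_ifs with hb ha ha
  · rw [min_eq_left ha]
    exact one_sub_exp_le_tangent hq a b
  · rw [min_eq_right (not_le.1 ha).le]
    linarith [one_sub_exp_le_tangent hq r₁ b]
  · rw [min_eq_left ha]
    have hslope : Real.exp (-q * r₁) * (b - r₁) ≤ Real.exp (-q * a) * (b - r₁) := by
      refine mul_le_mul_of_nonneg_right (Real.exp_le_exp.2 ?_) (by linarith)
      nlinarith
    linarith [one_sub_exp_le_tangent hq a r₁]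
  · rw [min_eq_right (not_le.1 ha).le]
    linarith

lemma concaveOn_f₁Dist (hq : 0 < q) (r₁ : ℝ) : ConcaveOn ℝ Set.univ (f₁Dist q r₁) := by
  refine ⟨convex_univ, fun x _ y _ α β hα hβ hαβ => ?_⟩
  simp only [smul_eq_mul]
  set z := α * x + β * y with hz
  have hx := mul_le_mul_of_nonneg_left (f₁Dist_le_tangent hq r₁ z x) hα
  have hy := mul_le_mul_of_nonneg_left (f₁Dist_le_tangent hq r₁ z y) hβ
  have hslopes : α * (f₁Slope q r₁ z * (x - z)) + β * (f₁Slope q r₁ z * (y - z)) = 0 := by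
    linear_combination -f₁Slope q r₁ z * hz - f₁Slope q r₁ z * z * hαβ
  linear_combination hx + hy + hslopes + f₁Dist q r₁ z * hαβ

lemma monotone_f₁Dist (hq : 0 < q) (r₁ : ℝ) : Monotone (f₁Dist q r₁) := fun a b hab => by
  nlinarith [f₁Dist_le_tangent hq r₁ b a, Real.exp_pos (-q * min b r₁),
    show f₁Slope q r₁ b = Real.exp (-q * min b r₁) from rfl]

lemma f₁Dist_of_le (hr : r ≤ r₁) : f₁Dist q r₁ r = 1 / q * (1 - Real.exp (-q * r)) := if_pos hr

lemma f₁Dist_zero (hr₁ : 0 ≤ r₁) : f₁Dist q r₁ 0 = 0 := by simp [f₁Dist_of_le hr₁]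

lemma f₁Dist_nonneg (hq : 0 < q) (hr₁ : 0 ≤ r₁) (hr : 0 ≤ r) : 0 ≤ f₁Dist q r₁ r :=
  (f₁Dist_zero hr₁).symm.trans_le (monotone_f₁Dist hq r₁ hr)

lemma f₁Dist_le_self (hq : 0 < q) (hr₁ : 0 ≤ r₁) (r : ℝ) : f₁Dist q r₁ r ≤ r := by
  simpa [f₁Dist_zero hr₁, f₁Slope, hr₁] using f₁Dist_le_tangent hq r₁ 0 r

lemma mul_f₁Dist_le_one (hq : 0 < q) (hr : r ≤ r₁) : q * f₁Dist q r₁ r ≤ 1 := by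
  rw [f₁Dist_of_le hr, ← mul_assoc, mul_one_div_cancel hq.ne', one_mul]
  exact sub_le_self _ (Real.exp_pos _).le

lemma measurable_f₁Dist (q r₁ : ℝ) : Measurable (f₁Dist q r₁) :=
  Measurable.ite measurableSet_Iic (by fun_prop) (by fun_prop)

lemma f₁Dist_sub_le (hq : 0 < q) (hr : r ≤ r₁) (ht : 0 ≤ t) :
    f₁Dist q r₁ (r - t) ≤ f₁Dist q r₁ r - Real.exp (-q * r) * (t + q / 2 * t ^ 2) := by
  rw [f₁Dist_of_le hr, f₁Dist_of_le (by linarith : r - t ≤ r₁),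
    show -q * (r - t) = -q * r + q * t by ring, Real.exp_add]
  have hexp := Real.quadratic_le_exp_of_nonneg (mul_nonneg hq.le ht)
  calc 1 / q * (1 - Real.exp (-q * r) * Real.exp (q * t))
      ≤ 1 / q * (1 - Real.exp (-q * r) * (1 + q * t + (q * t) ^ 2 / 2)) := by gcongr
    _ = 1 / q * (1 - Real.exp (-q * r)) - Real.exp (-q * r) * (t + q / 2 * t ^ 2) := by
      field_simp; ring

lemma f₁Slope_of_le (hr : r ≤ r₁) : f₁Slope q r₁ r = Real.exp (-q * r) := by
  rw [f₁Slope, min_eq_left hr]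

lemma sq_le_f₁Dist_symm_gap (hq : 0 < q) (hr : r ≤ r₁) (ht : 0 ≤ t) :
    Real.exp (-q * r) * (q / 2) * t ^ 2 ≤
      2 * f₁Dist q r₁ r - (f₁Dist q r₁ (r + t) + f₁Dist q r₁ (r - t)) := by
  have hadd := f₁Dist_le_tangent hq r₁ r (r + t)
  rw [f₁Slope_of_le hr] at hadd
  linarith [f₁Dist_sub_le hq hr ht]

lemma mul_le_two_mul_exp_sub_one {x y : ℝ} (hx : 0 ≤ x) (hy : 0 ≤ y) :
    (x + y) * x / 2 ≤ 2 * (Real.exp y * (Real.exp x - 1)) - (Real.exp x - 1) - x := by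
  have hexp := Real.quadratic_le_exp_of_nonneg hx
  have hprod : (1 + y) * (Real.exp x - 1) ≤ Real.exp y * (Real.exp x - 1) :=
    mul_le_mul_of_nonneg_right (by linarith [Real.add_one_le_exp y]) (by nlinarith)
  nlinarith [mul_nonneg hy (by nlinarith : 0 ≤ Real.exp x - 1 - x), mul_nonneg hx hy]

lemma mul_le_f₁Dist_crossing_gap (hq : 0 < q) (hr : 0 ≤ r) (hrt : r ≤ t) (ht : t ≤ r₁) :
    Real.exp (-q * t) * (q / 2) * (t * r) ≤
      2 * f₁Dist q r₁ r - (f₁Dist q r₁ (r + t) - f₁Dist q r₁ (t - r)) := by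
  have hadd := f₁Dist_le_tangent hq r₁ t (r + t)
  rw [f₁Slope_of_le ht, add_sub_cancel_right] at hadd
  have hr_eq : f₁Dist q r₁ r =
      1 / q * (Real.exp (-q * t) * (Real.exp (q * (t - r)) * (Real.exp (q * r) - 1))) := by
    have hsplit : Real.exp (-q * t) * Real.exp (q * (t - r)) = Real.exp (-q * r) := by
      rw [← Real.exp_add]; ring_nf
    have hinv : Real.exp (-q * r) * Real.exp (q * r) = 1 := by
      rw [← Real.exp_add, neg_mul, neg_add_cancel, Real.exp_zero]
    rw [f₁Dist_of_le (hrt.trans ht), ← mul_assoc (Real.exp _), hsplit,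
      mul_sub (Real.exp _), hinv, mul_one]
  have hsub_eq : f₁Dist q r₁ t - f₁Dist q r₁ (t - r) =
      1 / q * (Real.exp (-q * t) * (Real.exp (q * r) - 1)) := by
    rw [f₁Dist_of_le ht, f₁Dist_of_le (by linarith), mul_sub (Real.exp _), ← Real.exp_add]
    ring_nf
  have hscaled := mul_le_mul_of_nonneg_left
    (mul_le_two_mul_exp_sub_one (mul_nonneg hq.le hr) (mul_nonneg hq.le (sub_nonneg.2 hrt)))
    (by positivity : 0 ≤ 1 / q * Real.exp (-q * t))
  calc Real.exp (-q * t) * (q / 2) * (t * r)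
      = 1 / q * Real.exp (-q * t) * ((q * r + q * (t - r)) * (q * r) / 2) := by
        field_simp; ring
    _ ≤ _ := hscaled
    _ = 2 * f₁Dist q r₁ r - (f₁Dist q r₁ t - f₁Dist q r₁ (t - r)) - Real.exp (-q * t) * r := by
        rw [hr_eq, hsub_eq]; field_simp
    _ ≤ _ := by linarith

lemma mul_min_le_oddExtension_f₁Dist_gap (hq : 0 < q) (hr : 0 ≤ r) (hr₁ : max r |t| ≤ r₁) :
    Real.exp (-q * max r |t|) * (q / 2) * (|t| * min r |t|) ≤ 2 * f₁Dist q r₁ r -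
      (oddExtension (f₁Dist q r₁) (r + t) + oddExtension (f₁Dist q r₁) (r - t)) := by
  wlog ht : 0 ≤ t generalizing t
  · simpa [add_comm, sub_eq_add_neg] using this (t := -t) (by simpa using hr₁) (by linarith)
  rw [abs_of_nonneg ht] at hr₁ ⊢
  have hf0 : f₁Dist q r₁ 0 = 0 := f₁Dist_zero ((hr.trans (le_max_left r t)).trans hr₁)
  rw [oddExtension_of_nonneg hf0 (add_nonneg hr ht)]
  rcases le_total t r with htr | hrt
  · rw [max_eq_left htr] at hr₁ ⊢
    rw [min_eq_right htr, oddExtension_of_nonneg hf0 (sub_nonneg.2 htr), ← sq]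
    exact sq_le_f₁Dist_symm_gap hq hr₁ ht
  · rw [max_eq_right hrt] at hr₁ ⊢
    rw [min_eq_left hrt, oddExtension_of_nonpos hf0 (sub_nonpos.2 hrt), neg_sub, ← sub_eq_add_neg]
    exact mul_le_f₁Dist_crossing_gap hq hr hrt hr₁

end ConcaveDistance

section Gaussian

lemma stdNormalDensity_pos (u : ℝ) : 0 < stdNormalDensity u := by
  unfold stdNormalDensity; positivity

lemma stdNormalDensity_neg (u : ℝ) : stdNormalDensity (-u) = stdNormalDensity u := by
  simp only [stdNormalDensity, neg_sq]

lemma stdNormalDensity_le_of_abs_le {u v : ℝ} (h : |u| ≤ |v|) :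
    stdNormalDensity v ≤ stdNormalDensity u := by
  have hsq : u ^ 2 ≤ v ^ 2 := sq_le_sq.2 h
  unfold stdNormalDensity
  gcongr

lemma continuous_stdNormalDensity : Continuous stdNormalDensity := by
  unfold stdNormalDensity; fun_prop

lemma gaussianPDFReal_zero_one : gaussianPDFReal 0 1 = stdNormalDensity := by
  ext u; simp [stdNormalDensity, gaussianPDFReal]

lemma integral_gaussianReal_zero_one (g : ℝ → ℝ) :
    ∫ u, g u ∂gaussianReal 0 1 = ∫ u, stdNormalDensity u * g u := by
  simp only [integral_gaussianReal_eq_integral_smul one_ne_zero, gaussianPDFReal_zero_one,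
    smul_eq_mul]

lemma integrable_gaussianReal_zero_one_iff {g : ℝ → ℝ} :
    Integrable g (gaussianReal 0 1) ↔ Integrable fun u => stdNormalDensity u * g u := by
  rw [gaussianReal_of_var_ne_zero 0 one_ne_zero,
    integrable_withDensity_iff_integrable_smul₀' (measurable_gaussianPDF 0 1).aemeasurable
      (.of_forall fun _ => ENNReal.ofReal_lt_top)]
  simp only [toReal_gaussianPDF, gaussianPDFReal_zero_one, smul_eq_mul]

instance isNegInvariant_gaussianReal_zero (v : NNReal) : (gaussianReal 0 v).IsNegInvariant :=
  ⟨gaussianReal_map_neg.trans (by rw [neg_zero])⟩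

lemma integrable_comp_add_mul_gaussianReal {g : ℝ → ℝ} (hg : Measurable g) (hle : ∀ r, |g r| ≤ |r|)
    (ρ σ : ℝ) : Integrable (fun u => g (ρ + σ * u)) (gaussianReal 0 1) := by
  have hid : Integrable (fun u : ℝ => u) (gaussianReal 0 1) :=
    (memLp_id_gaussianReal (μ := 0) (v := 1) 1).integrable le_rfl
  exact ((integrable_const ρ).add (hid.const_mul σ)).mono
    (hg.comp (by fun_prop)).aestronglyMeasurable (.of_forall fun u => hle _)

lemma integral_le_sub_half_integral_of_symm {μ : Measure ℝ} [IsProbabilityMeasure μ]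
    [μ.IsNegInvariant] {F k : ℝ → ℝ} {c : ℝ} (hF : Integrable F μ) (hk : Integrable k μ)
    (hle : ∀ u, k u ≤ 2 * c - (F u + F (-u))) : ∫ u, F u ∂μ ≤ c - 1 / 2 * ∫ u, k u ∂μ := by
  have hF' : Integrable (fun u => F (-u)) μ := hF.comp_neg
  have hsum : Integrable (fun u => F u + F (-u)) μ := hF.add hF'
  have h := integral_mono hk ((integrable_const (2 * c)).sub hsum) hle
  rw [integral_sub' (integrable_const _) hsum, integral_add hF hF', integral_neg_eq_self,
    integral_const, probReal_univ, one_smul] at h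
  linarith

end Gaussian

section ConstantC₀

lemma integrableOn_Ioo_of_continuous {g : ℝ → ℝ} (hg : Continuous g) (a b : ℝ) :
    IntegrableOn g (Set.Ioo a b) :=
  hg.integrableOn_Icc.mono_set Set.Ioo_subset_Icc_self

lemma setIntegral_Ioo_pos {g : ℝ → ℝ} {a b : ℝ} (hab : a < b) (hg : Continuous g)
    (hpos : ∀ u ∈ Set.Ioo a b, 0 < g u) : 0 < ∫ u in Set.Ioo a b, g u := by
  rw [← integral_Ioc_eq_integral_Ioo, ← intervalIntegral.integral_of_le hab.le]
  exact intervalIntegral.intervalIntegral_pos_of_pos_on (hg.intervalIntegrable a b) hpos hab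

lemma c₀_pos : 0 < c₀ := by
  have hφ := continuous_stdNormalDensity
  refine mul_pos four_pos (lt_min ?_ (mul_pos ?_ ?_))
  · refine setIntegral_Ioo_pos (by norm_num) (by fun_prop) fun u hu => ?_
    have hexp : 0 < 1 - Real.exp (u - 1 / 2) :=
      sub_pos.2 (Real.exp_lt_one_iff.2 (by linarith [hu.2]))
    have := stdNormalDensity_pos u
    have := hu.1
    positivity
  · exact sub_pos.2 (Real.exp_lt_one_iff.2 (by norm_num))
  · refine setIntegral_Ioo_pos (by norm_num) (by fun_prop) fun u hu => ?_
    exact mul_pos (pow_pos hu.1 3) (stdNormalDensity_pos u)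

lemma c₀_le_four_mul_integral :
    c₀ ≤ 4 * ∫ u in Set.Ioo (0 : ℝ) (1 / 2), u ^ 2 * stdNormalDensity u := by
  have hφ := continuous_stdNormalDensity
  refine mul_le_mul_of_nonneg_left ((min_le_left _ _).trans ?_) zero_le_four
  refine setIntegral_mono_on (integrableOn_Ioo_of_continuous (by fun_prop) _ _)
    (integrableOn_Ioo_of_continuous (by fun_prop) _ _) measurableSet_Ioo fun u _ => ?_
  refine mul_le_mul_of_nonneg_right ?_ (stdNormalDensity_pos u).le
  exact mul_le_of_le_one_right (sq_nonneg u) (sub_le_self _ (Real.exp_pos _).le)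

lemma setIntegral_sq_gaussianReal (a : ℝ) :
    ∫ u in Set.Ioo (-a) a, u ^ 2 ∂gaussianReal 0 1 =
      2 * ∫ u in Set.Ioo 0 a, u ^ 2 * stdNormalDensity u := by
  have heven (u : ℝ) : stdNormalDensity u * (Set.Ioo (-a) a).indicator (fun u => u ^ 2) u =
      (Set.Iio a).indicator (fun u => u ^ 2 * stdNormalDensity u) |u| := by
    have hmem : |u| ∈ Set.Iio a ↔ u ∈ Set.Ioo (-a) a := by
      simp only [Set.mem_Iio, Set.mem_Ioo, abs_lt]
    have hφ : stdNormalDensity |u| = stdNormalDensity u := by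
      rcases abs_choice u with h | h <;> rw [h]
      exact stdNormalDensity_neg u
    by_cases hu : u ∈ Set.Ioo (-a) a
    · rw [Set.indicator_of_mem hu, Set.indicator_of_mem (hmem.2 hu), sq_abs, hφ, mul_comm]
    · rw [Set.indicator_of_notMem hu, Set.indicator_of_notMem (mt hmem.1 hu), mul_zero]
  calc ∫ u in Set.Ioo (-a) a, u ^ 2 ∂gaussianReal 0 1
      = ∫ u, (Set.Iio a).indicator (fun u => u ^ 2 * stdNormalDensity u) |u| := by
        rw [← integral_indicator measurableSet_Ioo, integral_gaussianReal_zero_one]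
        simp_rw [heven]
    _ = 2 * ∫ u in Set.Ioi 0, (Set.Iio a).indicator (fun u => u ^ 2 * stdNormalDensity u) u :=
        integral_comp_abs
    _ = 2 * ∫ u in Set.Ioo 0 a, u ^ 2 * stdNormalDensity u := by
        rw [setIntegral_indicator measurableSet_Iio, Set.Ioi_inter_Iio]

lemma c₀_le_two_mul_integral :
    c₀ ≤ 2 * ∫ u in Set.Ioo (-(1 / 2) : ℝ) (1 / 2), u ^ 2 ∂gaussianReal 0 1 := by
  rw [setIntegral_sq_gaussianReal]
  linarith [c₀_le_four_mul_integral]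

lemma integrable_sq_gaussianReal : Integrable (fun u : ℝ => u ^ 2) (gaussianReal 0 1) :=
  (memLp_id_gaussianReal (μ := 0) (v := 1) 2).integrable_sq

lemma c₀_le_two : c₀ ≤ 2 := by
  have hvar : ∫ u : ℝ, u ^ 2 ∂gaussianReal 0 1 = 1 := by
    have h := variance_of_integral_eq_zero (μ := gaussianReal 0 1) (X := id) aemeasurable_id
      integral_id_gaussianReal
    rw [variance_id_gaussianReal] at h
    exact h.symm
  have hle := setIntegral_le_integral (s := Set.Ioo (-(1 / 2)) (1 / 2)) integrable_sq_gaussianReal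
    (.of_forall fun u => sq_nonneg u)
  linarith [c₀_le_two_mul_integral]

end ConstantC₀

/-- The probability that the mirror coupling glues a pair at distance `a`, in units of the noise
level, given that the noise component along the line through the pair equals `u`. -/
noncomputable def glueProb (a u : ℝ) : ℝ :=
  min (stdNormalDensity (a + u) / stdNormalDensity u) 1

/-- The mean of `f` of the distance after one mirror-coupled step with noise level `s` from a pair
at distance `ρ`, written as the mean of the odd extension of `f` at the unglued signed distance. -/
noncomputable def mirrorMean (f : ℝ → ℝ) (s ρ : ℝ) : ℝ :=
  ∫ u, oddExtension f (ρ + 2 * s * u) ∂gaussianReal 0 1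

section Reflection

variable {a u : ℝ}

lemma glueProb_mem_Icc (a u : ℝ) : glueProb a u ∈ Set.Icc 0 1 :=
  ⟨le_min (div_pos (stdNormalDensity_pos _) (stdNormalDensity_pos _)).le zero_le_one,
    min_le_right _ _⟩

lemma measurable_glueProb (a : ℝ) : Measurable (glueProb a) := by
  have := continuous_stdNormalDensity.measurable
  unfold glueProb
  fun_prop

lemma mul_one_sub_glueProb_of_nonneg (ha : 0 ≤ a) (hu : 0 ≤ a + 2 * u) :
    stdNormalDensity u * (1 - glueProb a u) = stdNormalDensity u - stdNormalDensity (a + u) := by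
  have hle : stdNormalDensity (a + u) ≤ stdNormalDensity u :=
    stdNormalDensity_le_of_abs_le (sq_le_sq.1 (by nlinarith))
  have hpos := stdNormalDensity_pos u
  rw [glueProb, min_eq_left ((div_le_one hpos).2 hle)]
  field_simp

lemma glueProb_of_nonpos (ha : 0 ≤ a) (hu : a + 2 * u ≤ 0) : glueProb a u = 1 := by
  have hle : stdNormalDensity u ≤ stdNormalDensity (a + u) :=
    stdNormalDensity_le_of_abs_le (sq_le_sq.1 (by nlinarith))
  exact min_eq_right ((one_le_div (stdNormalDensity_pos u)).2 hle)

/-- The substitution `u ↦ -(ρ / s + u)` negates `ρ + 2 * s * u` and turns the mass removed by gluing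
into the mass that has crossed the mirror. -/
theorem integral_one_sub_glueProb_mul {f : ℝ → ℝ} {ρ s : ℝ} (hρ : 0 ≤ ρ) (hs : 0 < s)
    (hf : Integrable (fun u => f |ρ + 2 * s * u|) (gaussianReal 0 1)) :
    ∫ u, (1 - glueProb (ρ / s) u) * f |ρ + 2 * s * u| ∂gaussianReal 0 1 =
      mirrorMean f s ρ := by
  set P : ℝ → ℝ := (Set.Ioi 0).indicator f
  have hadd : Integrable fun u => stdNormalDensity u * P (ρ + 2 * s * u) :=
    integrable_gaussianReal_zero_one_iff.1 (integrable_indicator_Ioi_comp (by fun_prop) hf)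
  set N : ℝ → ℝ := fun u => stdNormalDensity u * P (-(ρ + 2 * s * u))
  have hneg : Integrable N :=
    integrable_gaussianReal_zero_one_iff.1
      (integrable_indicator_Ioi_comp (by fun_prop) (by simpa only [abs_neg] using hf))
  have hreflect (u : ℝ) :
      stdNormalDensity (ρ / s + u) * P (ρ + 2 * s * u) = N (-(ρ / s) - u) := by
    have hw : -(ρ + 2 * s * (-(ρ / s) - u)) = ρ + 2 * s * u := by field_simp; ring
    have hφ : stdNormalDensity (-(ρ / s) - u) = stdNormalDensity (ρ / s + u) := by
      rw [← neg_add', stdNormalDensity_neg]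
    simp only [N, hw, hφ]
  have hglue (u : ℝ) : stdNormalDensity u * ((1 - glueProb (ρ / s) u) * f |ρ + 2 * s * u|) =
      stdNormalDensity u * P (ρ + 2 * s * u) -
        stdNormalDensity (ρ / s + u) * P (ρ + 2 * s * u) := by
    have hw : ρ + 2 * s * u = s * (ρ / s + 2 * u) := by field_simp
    have ha : 0 ≤ ρ / s := div_nonneg hρ hs.le
    rcases le_or_gt (ρ + 2 * s * u) 0 with hu | hu
    · rw [glueProb_of_nonpos ha (nonpos_of_mul_nonpos_right (hw ▸ hu) hs)]
      simp [P, hu]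
    · rw [← mul_assoc, mul_one_sub_glueProb_of_nonneg ha
        (pos_of_mul_pos_right (hw ▸ hu) hs.le).le, abs_of_pos hu]
      simp only [P, Set.indicator_of_mem (Set.mem_Ioi.2 hu)]
      ring
  have hodd (u : ℝ) : stdNormalDensity u * oddExtension f (ρ + 2 * s * u) =
      stdNormalDensity u * P (ρ + 2 * s * u) - N u := by
    rw [oddExtension_eq_indicator_sub_indicator, mul_sub]
  simp only [mirrorMean, integral_gaussianReal_zero_one, hglue, hreflect, hodd]
  rw [integral_sub hadd (hneg.comp_sub_left _), integral_sub hadd hneg,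
    integral_sub_left_eq_self N]

lemma mirrorMean_zero (f : ℝ → ℝ) (s : ℝ) : mirrorMean f s 0 = 0 := by
  have h := integral_neg_eq_self (fun u => oddExtension f (0 + 2 * s * u)) (gaussianReal 0 1)
  simp only [zero_add, mul_neg, oddExtension_neg, integral_neg] at h
  simp only [mirrorMean, zero_add]
  linarith

end Reflection

section MirrorCoupling

lemma setIntegral_Icc_ite_le {p : ℝ} (hp : p ∈ Set.Icc (0 : ℝ) 1) (c : ℝ) :
    ∫ t in Set.Icc (0 : ℝ) 1, (if t ≤ p then 0 else c) = (1 - p) * c := by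
  have hind : (fun t => if t ≤ p then 0 else c) = (Set.Ioi p).indicator fun _ => c := by
    ext t; simp only [Set.indicator_apply, Set.mem_Ioi, ← not_le, ite_not]
  have hset : Set.Icc 0 1 ∩ Set.Ioi p = Set.Ioc p 1 := by
    ext t
    simp only [Set.mem_inter_iff, Set.mem_Icc, Set.mem_Ioi, Set.mem_Ioc]
    exact ⟨fun h => ⟨h.2, h.1.2⟩, fun h => ⟨⟨hp.1.trans h.1.le, h.2⟩, h.1⟩⟩
  rw [hind, setIntegral_indicator measurableSet_Ioi, hset, setIntegral_const,
    Real.volume_real_Ioc_of_le hp.2, smul_eq_mul]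

lemma integral_ite_le_uniform {Ω α : Type*} [MeasurableSpace Ω] [MeasurableSpace α]
    {μ : Measure Ω} [IsProbabilityMeasure μ] {U : Ω → α} {ζ : Ω → ℝ} (hU : Measurable U)
    (hζ : Measurable ζ) (hζlaw : μ.map ζ = volume.restrict (Set.Icc (0 : ℝ) 1))
    (hindep : IndepFun U ζ μ) {p g : α → ℝ} (hp : Measurable p) (hp01 : ∀ a, p a ∈ Set.Icc 0 1)
    (hg : Measurable g) (hgint : Integrable g (μ.map U)) :
    ∫ ω, (if ζ ω ≤ p (U ω) then 0 else g (U ω)) ∂μ = ∫ a, (1 - p a) * g a ∂μ.map U := by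
  set H : α × ℝ → ℝ := fun v => if v.2 ≤ p v.1 then 0 else g v.1
  have hH : Measurable H :=
    Measurable.ite (measurableSet_le measurable_snd (hp.comp measurable_fst)) measurable_const
      (hg.comp measurable_fst)
  have : IsProbabilityMeasure (μ.map U) := Measure.isProbabilityMeasure_map hU.aemeasurable
  have hHint : Integrable H ((μ.map U).prod (volume.restrict (Set.Icc (0 : ℝ) 1))) := by
    refine (hgint.comp_fst _).mono hH.aestronglyMeasurable (.of_forall fun v => ?_)
    simp only [H]
    split_ifs
    · simp
    · exact le_rfl
  calc ∫ ω, (if ζ ω ≤ p (U ω) then 0 else g (U ω)) ∂μ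
      = ∫ v, H v ∂μ.map fun ω => (U ω, ζ ω) :=
        (integral_map (hU.prodMk hζ).aemeasurable hH.aestronglyMeasurable).symm
    _ = ∫ a, (∫ t in Set.Icc (0 : ℝ) 1, H (a, t)) ∂μ.map U := by
        rw [(indepFun_iff_map_prod_eq_prod_map_map hU.aemeasurable hζ.aemeasurable).1 hindep,
          hζlaw, integral_prod _ hHint]
    _ = ∫ a, (1 - p a) * g a ∂μ.map U := by
        simp only [H, setIntegral_Icc_ite_le (hp01 _)]

variable {d : ℕ}

lemma map_inner_stdGaussian {e : EuclideanSpace ℝ (Fin d)} (he : ‖e‖ = 1) :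
    (_root_.stdGaussian d).map (fun z => inner ℝ e z) = gaussianReal 0 1 := by
  have hstd : _root_.stdGaussian d =
      ProbabilityTheory.stdGaussian (EuclideanSpace ℝ (Fin d)) := by
    rw [← map_pi_eq_stdGaussian]; rfl
  have hmap := IsGaussian.map_eq_gaussianReal
    (μ := ProbabilityTheory.stdGaussian (EuclideanSpace ℝ (Fin d))) (innerSL ℝ e)
  rw [integral_strongDual_stdGaussian, variance_dual_stdGaussian, innerSL_apply_norm, he] at hmap
  rw [hstd]
  simpa using hmap

variable {h : ℝ} {xh yh : EuclideanSpace ℝ (Fin d)}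

lemma min_gaussDensity_div_eq_glueProb (hh : 0 < h) (z : EuclideanSpace ℝ (Fin d)) :
    min (gaussDensity d h yh (xh + √h • z)) (gaussDensity d h xh (xh + √h • z)) /
        gaussDensity d h xh (xh + √h • z) =
      glueProb (‖xh - yh‖ / √h) (inner ℝ (NormedSpace.normalize (xh - yh)) z) := by
  have hpos : 0 < gaussDensity d h xh (xh + √h • z) := by unfold gaussDensity; positivity
  set e := NormedSpace.normalize (xh - yh)
  have hxy : xh - yh = ‖xh - yh‖ • e := (NormedSpace.norm_smul_normalize _).symm
  have hinner : inner ℝ (xh - yh) (√h • z) = ‖xh - yh‖ * (√h * inner ℝ e z) := by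
    conv_lhs => rw [hxy]
    rw [real_inner_smul_left, real_inner_smul_right]
  rw [← min_div_div_right hpos.le, div_self hpos.ne', glueProb]
  congr 1
  unfold gaussDensity stdNormalDensity
  rw [mul_div_mul_left _ _ (by positivity), mul_div_mul_left _ _ (by positivity), ← Real.exp_sub,
    ← Real.exp_sub, add_sub_cancel_left, add_sub_right_comm, norm_add_sq_real, hinner]
  congr 1
  rw [add_sq, div_pow, Real.sq_sqrt hh.le]
  field_simp
  linear_combination (-2 * ‖xh - yh‖ * inner ℝ e z) * Real.sq_sqrt hh.le

lemma norm_sub_mirrorY (hh : 0 < h) (hne : xh ≠ yh) (z : EuclideanSpace ℝ (Fin d)) (t : ℝ) :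
    ‖xh + √h • z - mirrorY d h xh yh z t‖ =
      if t ≤ glueProb (‖xh - yh‖ / √h) (inner ℝ (NormedSpace.normalize (xh - yh)) z) then 0
      else |‖xh - yh‖ + 2 * √h * inner ℝ (NormedSpace.normalize (xh - yh)) z| := by
  rw [mirrorY, min_gaussDensity_div_eq_glueProb hh]
  set e := NormedSpace.normalize (xh - yh)
  have hxy : xh - yh = ‖xh - yh‖ • e := (NormedSpace.norm_smul_normalize _).symm
  have hnorm : ‖e‖ = 1 := NormedSpace.norm_normalize (sub_ne_zero.2 hne)
  have hreflect : reflect d xh yh z = z - (2 * inner ℝ e z) • e := if_neg hne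
  split_ifs
  · rw [sub_self, norm_zero]
  · have hdiff : xh + √h • z - (yh + √h • (z - (2 * inner ℝ e z) • e)) =
        (‖xh - yh‖ + 2 * √h * inner ℝ e z) • e := by
      rw [add_smul, ← hxy]
      module
    rw [hreflect, hdiff, norm_smul, hnorm, mul_one, Real.norm_eq_abs]

theorem integral_comp_norm_sub_mirrorY {Ω : Type*} [MeasurableSpace Ω] {μ : Measure Ω}
    [IsProbabilityMeasure μ] {Z : Ω → EuclideanSpace ℝ (Fin d)} {ζ : Ω → ℝ} (hZ : Measurable Z)
    (hζ : Measurable ζ) (hZlaw : μ.map Z = _root_.stdGaussian d)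
    (hζlaw : μ.map ζ = volume.restrict (Set.Icc (0 : ℝ) 1)) (hindep : IndepFun Z ζ μ)
    {f : ℝ → ℝ} (hf0 : f 0 = 0) (hf : Measurable f) (hh : 0 < h)
    (hfint : Integrable (fun u => f |‖xh - yh‖ + 2 * √h * u|) (gaussianReal 0 1)) :
    ∫ ω, f ‖xh + √h • Z ω - mirrorY d h xh yh (Z ω) (ζ ω)‖ ∂μ =
      mirrorMean f √h ‖xh - yh‖ := by
  rcases eq_or_ne xh yh with rfl | hne
  · simp [mirrorY, reflect, hf0, mirrorMean_zero]
  set e := NormedSpace.normalize (xh - yh)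
  have hinner : Measurable fun z : EuclideanSpace ℝ (Fin d) => inner ℝ e z := by fun_prop
  set U : Ω → ℝ := (fun z => inner ℝ e z) ∘ Z
  have hUlaw : μ.map U = gaussianReal 0 1 := by
    rw [← map_inner_stdGaussian (NormedSpace.norm_normalize (sub_ne_zero.2 hne)), ← hZlaw,
      Measure.map_map hinner hZ]
  have hw : Measurable fun u => |‖xh - yh‖ + 2 * √h * u| := by fun_prop
  calc ∫ ω, f ‖xh + √h • Z ω - mirrorY d h xh yh (Z ω) (ζ ω)‖ ∂μ
      = ∫ ω, (if ζ ω ≤ glueProb (‖xh - yh‖ / √h) (U ω) then 0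
          else f |‖xh - yh‖ + 2 * √h * U ω|) ∂μ := by
        simp only [norm_sub_mirrorY hh hne, apply_ite f, hf0, U, e, Function.comp_apply]
    _ = ∫ u, (1 - glueProb (‖xh - yh‖ / √h) u) * f |‖xh - yh‖ + 2 * √h * u|
          ∂gaussianReal 0 1 := by
        rw [← hUlaw] at hfint ⊢
        exact integral_ite_le_uniform (hinner.comp hZ) hζ hζlaw
          (hindep.comp hinner measurable_id) (measurable_glueProb _) (glueProb_mem_Icc _)
          (hf.comp hw) hfint
    _ = mirrorMean f √h ‖xh - yh‖ :=
        integral_one_sub_glueProb_mul (norm_nonneg _) (Real.sqrt_pos.2 hh) hfint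

end MirrorCoupling

section MirrorMean

variable {q r₁ s ρ : ℝ}

lemma integrable_f₁Dist_comp (hq : 0 < q) (hr₁ : 0 ≤ r₁) (ρ s : ℝ) :
    Integrable (fun u => f₁Dist q r₁ |ρ + 2 * s * u|) (gaussianReal 0 1) :=
  integrable_comp_add_mul_gaussianReal (g := fun r => f₁Dist q r₁ |r|)
    ((measurable_f₁Dist q r₁).comp (by fun_prop))
    (fun r => by
      rw [abs_of_nonneg (f₁Dist_nonneg hq hr₁ (abs_nonneg r))]
      exact f₁Dist_le_self hq hr₁ |r|) ρ (2 * s)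

lemma integrable_oddExtension_f₁Dist (hq : 0 < q) (hr₁ : 0 ≤ r₁) (ρ s : ℝ) :
    Integrable (fun u => oddExtension (f₁Dist q r₁) (ρ + 2 * s * u)) (gaussianReal 0 1) :=
  integrable_oddExtension_comp (by fun_prop) (integrable_f₁Dist_comp hq hr₁ ρ s)

lemma monotone_mirrorMean_f₁Dist (hq : 0 < q) (hr₁ : 0 ≤ r₁) (s : ℝ) :
    Monotone (mirrorMean (f₁Dist q r₁) s) := fun ρ ρ' hρ =>
  integral_mono (integrable_oddExtension_f₁Dist hq hr₁ ρ s)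
    (integrable_oddExtension_f₁Dist hq hr₁ ρ' s) fun _ =>
      monotone_oddExtension (f₁Dist_zero hr₁) ((monotone_f₁Dist hq r₁).monotoneOn _) (by gcongr)

lemma oddExtension_f₁Dist_gap_nonneg (hq : 0 < q) (hr₁ : 0 ≤ r₁) (hρ : 0 ≤ ρ) (t : ℝ) :
    0 ≤ 2 * f₁Dist q r₁ ρ -
      (oddExtension (f₁Dist q r₁) (ρ + t) + oddExtension (f₁Dist q r₁) (ρ - t)) :=
  sub_nonneg.2 <| oddExtension_add_add_sub_le
    ((concaveOn_f₁Dist hq r₁).subset (Set.subset_univ _) (convex_Ici 0)) (f₁Dist_zero hr₁) hρ t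

lemma mirrorMean_f₁Dist_le_sub_integral (hq : 0 < q) (hr₁ : 0 ≤ r₁) {k : ℝ → ℝ}
    (hk : Integrable k (gaussianReal 0 1))
    (hle : ∀ u, k u ≤ 2 * f₁Dist q r₁ ρ - (oddExtension (f₁Dist q r₁) (ρ + 2 * s * u) +
      oddExtension (f₁Dist q r₁) (ρ - 2 * s * u))) :
    mirrorMean (f₁Dist q r₁) s ρ ≤ f₁Dist q r₁ ρ - 1 / 2 * ∫ u, k u ∂gaussianReal 0 1 :=
  integral_le_sub_half_integral_of_symm (integrable_oddExtension_f₁Dist hq hr₁ ρ s) hk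
    fun u => by simpa only [mul_neg, ← sub_eq_add_neg] using hle u

lemma mirrorMean_f₁Dist_le (hq : 0 < q) (hr₁ : 0 ≤ r₁) (hρ : 0 ≤ ρ) (s : ℝ) :
    mirrorMean (f₁Dist q r₁) s ρ ≤ f₁Dist q r₁ ρ := by
  simpa using mirrorMean_f₁Dist_le_sub_integral hq hr₁ (integrable_zero _ _ _)
    fun u => oddExtension_f₁Dist_gap_nonneg hq hr₁ hρ (2 * s * u)

lemma sq_mul_le_f₁Dist_gap (hq : 0 < q) (hs : 0 ≤ s) (hρ : 0 ≤ ρ) (hr₁ : max ρ s ≤ r₁) {u : ℝ}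
    (hu : |u| ≤ 1 / 2) :
    Real.exp (-q * max ρ s) * (q / 2) * (4 * (s * min ρ s)) * u ^ 2 ≤
      2 * f₁Dist q r₁ ρ - (oddExtension (f₁Dist q r₁) (ρ + 2 * s * u) +
        oddExtension (f₁Dist q r₁) (ρ - 2 * s * u)) := by
  have habs : |2 * s * u| = 2 * |u| * s := by
    rw [abs_mul, abs_of_nonneg (by positivity)]; ring
  have hts : |2 * s * u| ≤ s := by
    rw [habs]; exact mul_le_of_le_one_left hs (by linarith)
  have hmax : max ρ |2 * s * u| ≤ max ρ s := max_le_max_left ρ hts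
  have hmin : 2 * |u| * min ρ s ≤ min ρ |2 * s * u| := by
    rw [habs, mul_min_of_nonneg _ _ (by positivity)]
    exact min_le_min_right _ (mul_le_of_le_one_left hρ (by linarith))
  have hprod : 4 * (s * min ρ s) * u ^ 2 ≤ |2 * s * u| * min ρ |2 * s * u| := by
    calc 4 * (s * min ρ s) * u ^ 2 = 2 * |u| * s * (2 * |u| * min ρ s) := by
          rw [← sq_abs u]; ring
      _ ≤ |2 * s * u| * min ρ |2 * s * u| := by rw [← habs]; gcongr
  refine le_trans ?_ (mul_min_le_oddExtension_f₁Dist_gap hq hρ (hmax.trans hr₁))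
  have hexp : Real.exp (-q * max ρ s) ≤ Real.exp (-q * max ρ |2 * s * u|) :=
    Real.exp_le_exp.2 (mul_le_mul_of_nonpos_left hmax (neg_nonpos.2 hq.le))
  rw [mul_assoc _ (4 * _)]
  have : 0 ≤ min ρ s := le_min hρ hs
  gcongr

theorem mirrorMean_f₁Dist_le_sub (hq : 0 < q) (hs : 0 ≤ s) (hρ : 0 ≤ ρ) (hr₁ : max ρ s ≤ r₁) :
    mirrorMean (f₁Dist q r₁) s ρ ≤
      f₁Dist q r₁ ρ - q * c₀ / 2 * (Real.exp (-q * max ρ s) * (s * min ρ s)) := by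
  have hr₁0 : 0 ≤ r₁ := (hρ.trans (le_max_left ρ s)).trans hr₁
  set D := Real.exp (-q * max ρ s) * (q / 2) * (4 * (s * min ρ s)) with hD
  have hD0 : 0 ≤ D := by have := le_min hρ hs; positivity
  have hgap := mirrorMean_f₁Dist_le_sub_integral (s := s) hq hr₁0
    (k := (Set.Ioo (-(1 / 2)) (1 / 2)).indicator fun u => D * u ^ 2)
    ((integrable_sq_gaussianReal.const_mul D).indicator measurableSet_Ioo) fun u => by
      by_cases hu : u ∈ Set.Ioo (-(1 / 2) : ℝ) (1 / 2)
      · rw [Set.indicator_of_mem hu]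
        exact sq_mul_le_f₁Dist_gap hq hs hρ hr₁ (abs_lt.2 hu).le
      · rw [Set.indicator_of_notMem hu]
        exact oddExtension_f₁Dist_gap_nonneg hq hr₁0 hρ (2 * s * u)
  rw [integral_indicator measurableSet_Ioo, integral_const_mul] at hgap
  have hgain := mul_le_mul_of_nonneg_left c₀_le_two_mul_integral hD0
  have hDc₀ : q * c₀ / 2 * (Real.exp (-q * max ρ s) * (s * min ρ s)) = D * c₀ / 4 := by
    rw [hD]; ring
  linarith

end MirrorMean

section Parameters

variable {L K R h : ℝ}

lemma qConst_pos (hL : 0 < L) (hR : 0 < R) (K : ℝ) : 0 < qConst L K R :=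
  div_pos (by positivity) c₀_pos

lemma qConst_mul_c₀ (L K R : ℝ) : qConst L K R * c₀ = 7 * (L * R) := by
  rw [qConst, div_mul_cancel₀ _ c₀_pos.ne', mul_assoc]

lemma c₁Const_eq (L K R : ℝ) :
    c₁Const L K R = min (K / 2) (35 / 24 * (L * R * qConst L K R)) *
      Real.exp (-qConst L K R * (7 / 6 * R)) := by
  have := c₀_pos
  unfold c₁Const qConst
  congr 2
  · field_simp; ring
  · field_simp; ring

lemma h₀₁_mul (hL : 0 < L) (K R : ℝ) : h₀₁ L K R * L =
    min (1 / 6) (min (K / L) (min (L * R ^ 2 / 3) (c₀ ^ 2 / (970 * (L * R ^ 2))))) := by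
  rw [h₀₁, mul_right_comm, one_div_mul_cancel hL.ne', one_mul]

lemma mul_le_one_sixth (hL : 0 < L) (hh : h ≤ h₀₁ L K R) : h * L ≤ 1 / 6 :=
  (mul_le_mul_of_nonneg_right hh hL.le).trans ((h₀₁_mul hL K R).trans_le (min_le_left _ _))

lemma mul_sq_le_of_le_h₀₁ (hL : 0 < L) (hh : h ≤ h₀₁ L K R) : h * L ^ 2 ≤ K := by
  have hK : h * L ≤ K / L := (mul_le_mul_of_nonneg_right hh hL.le).trans <|
    (h₀₁_mul hL K R).trans_le ((min_le_right _ _).trans (min_le_left _ _))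
  rw [sq, ← mul_assoc]
  exact (le_div_iff₀ hL).1 hK

lemma sqrt_le_of_le_h₀₁ (hL : 0 < L) (hR : 0 < R) (hh : h ≤ h₀₁ L K R) : √h ≤ R := by
  have hmin : h * L ≤ L * R ^ 2 / 3 := (mul_le_mul_of_nonneg_right hh hL.le).trans <|
    (h₀₁_mul hL K R).trans_le <|
      (min_le_right _ _).trans ((min_le_right _ _).trans (min_le_left _ _))
  exact Real.sqrt_le_iff.2 ⟨hR.le, by nlinarith [sq_nonneg R]⟩

lemma mul_sqrt_le_of_le_h₀₁ (hL : 0 < L) (hR : 0 < R) (hh₀ : 0 ≤ h) (hh : h ≤ h₀₁ L K R) :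
    L * R * √h ≤ c₀ / 31 := by
  have hmin : h * L ≤ c₀ ^ 2 / (970 * (L * R ^ 2)) :=
    (mul_le_mul_of_nonneg_right hh hL.le).trans <| (h₀₁_mul hL K R).trans_le <|
      (min_le_right _ _).trans ((min_le_right _ _).trans (min_le_right _ _))
  rw [le_div_iff₀ (by positivity)] at hmin
  refine abs_le_of_sq_le_sq' ?_ (by have := c₀_pos; positivity) |>.2
  rw [mul_pow, Real.sq_sqrt hh₀]
  -- The constant 31 is available because 31² = 961 ≤ 970.
  nlinarith [sq_nonneg c₀]

lemma qConst_mul_sqrt_le (hL : 0 < L) (hR : 0 < R) (hh₀ : 0 ≤ h) (hh : h ≤ h₀₁ L K R) :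
    qConst L K R * √h ≤ 7 / 31 := by
  refine le_of_mul_le_mul_right ?_ c₀_pos
  linarith [congrArg (· * √h) (qConst_mul_c₀ L K R), mul_sqrt_le_of_le_h₀₁ hL hR hh₀ hh]

lemma mul_R_le_r₁₁ (hL : 0 < L) (hR : 0 < R) (hh : h ≤ h₀₁ L K R) :
    (1 + h * L) * R ≤ r₁₁ L K R := by
  unfold r₁₁; gcongr

lemma R_le_r₁₁ (hL : 0 < L) (hR : 0 < R) (hh : 0 ≤ h₀₁ L K R) : R ≤ r₁₁ L K R := by
  simpa using mul_R_le_r₁₁ hL hR hh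

lemma r₁₁_le (hL : 0 < L) (hR : 0 < R) : r₁₁ L K R ≤ 7 / 6 * R :=
  mul_le_mul_of_nonneg_right (by linarith [mul_le_one_sixth hL (le_refl (h₀₁ L K R))]) hR.le

end Parameters

section Drift

lemma norm_add_smul_le_of_norm_le {E : Type*} [SeminormedAddCommGroup E] [NormedSpace ℝ E]
    {u v : E} {L h : ℝ} (hh : 0 ≤ h) (hv : ‖v‖ ≤ L * ‖u‖) :
    ‖u + h • v‖ ≤ (1 + h * L) * ‖u‖ := by
  calc ‖u + h • v‖ ≤ ‖u‖ + h * ‖v‖ :=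
        (norm_add_le _ _).trans_eq (by rw [norm_smul, Real.norm_of_nonneg hh])
    _ ≤ ‖u‖ + h * (L * ‖u‖) := by gcongr
    _ = (1 + h * L) * ‖u‖ := by ring

lemma norm_add_smul_le_of_inner_le {E : Type*} [NormedAddCommGroup E] [InnerProductSpace ℝ E]
    {u v : E} {L K h : ℝ} (hh : 0 ≤ h) (hv : ‖v‖ ≤ L * ‖u‖) (hLK : h * L ^ 2 ≤ K)
    (hinner : inner ℝ u v ≤ -K * ‖u‖ ^ 2) : ‖u + h • v‖ ≤ (1 - K * h / 2) * ‖u‖ := by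
  rcases eq_or_ne u 0 with rfl | hu
  · have hv0 : v = 0 := norm_le_zero_iff.1 (by simpa using hv)
    simp [hv0]
  have hnoise : h ^ 2 * ‖v‖ ^ 2 ≤ h * K * ‖u‖ ^ 2 := by
    calc h ^ 2 * ‖v‖ ^ 2 ≤ h ^ 2 * (L * ‖u‖) ^ 2 := by gcongr
      _ = h * (h * L ^ 2) * ‖u‖ ^ 2 := by ring
      _ ≤ h * K * ‖u‖ ^ 2 := by gcongr
  have hsq : ‖u + h • v‖ ^ 2 ≤ (1 - K * h) * ‖u‖ ^ 2 := by
    rw [norm_add_sq_real, real_inner_smul_right, norm_smul, Real.norm_of_nonneg hh, mul_pow]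
    linarith [mul_le_mul_of_nonneg_left hinner hh]
  refine le_of_mul_le_mul_right ?_ (norm_pos_iff.2 hu)
  linarith [two_mul_le_add_sq ‖u + h • v‖ ‖u‖]

end Drift

section Contraction

variable {L K R h r ρ : ℝ}

lemma exp_le_exp_max_sqrt (hL : 0 < L) (hR : 0 < R) (hh₀ : 0 ≤ h) (hh : h ≤ h₀₁ L K R)
    (hr₀ : 0 ≤ r) (hr : r ≤ R) : 24 / 31 * Real.exp (-qConst L K R * r) ≤
      Real.exp (-qConst L K R * max ((1 + h * L) * r) √h) := by
  have hq := qConst_pos hL hR K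
  have hdrift : h * L * r ≤ √h := by
    calc h * L * r ≤ h * L * R := by gcongr
      _ = L * R * √h * √h := by rw [mul_assoc _ √h, Real.mul_self_sqrt hh₀]; ring
      _ ≤ 1 * √h := by
        gcongr
        linarith [mul_sqrt_le_of_le_h₀₁ hL hR hh₀ hh, c₀_le_two]
      _ = √h := one_mul _
  have hmax : max ((1 + h * L) * r) √h ≤ r + √h := max_le (by linarith) (by linarith)
  calc 24 / 31 * Real.exp (-qConst L K R * r)
      ≤ Real.exp (-(qConst L K R * √h)) * Real.exp (-qConst L K R * r) := by
        gcongr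
        linarith [Real.one_sub_le_exp_neg (qConst L K R * √h), qConst_mul_sqrt_le hL hR hh₀ hh]
    _ = Real.exp (-qConst L K R * (r + √h)) := by rw [← Real.exp_add]; ring_nf
    _ ≤ Real.exp (-qConst L K R * max ((1 + h * L) * r) √h) :=
        Real.exp_le_exp.2 (mul_le_mul_of_nonpos_left hmax (neg_nonpos.2 hq.le))

lemma mul_le_mul_sqrt_mul_min (hL : 0 < L) (hR : 0 < R) (hh₀ : 0 ≤ h) (hh : h ≤ h₀₁ L K R)
    (hr₀ : 0 ≤ r) (hr : r ≤ R) : h * r ≤ R * (√h * min ((1 + h * L) * r) √h) := by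
  have hs := sqrt_le_of_le_h₀₁ hL hR hh
  have hmin : √h * r ≤ R * min ((1 + h * L) * r) √h := by
    rw [mul_min_of_nonneg _ _ hR.le]
    refine le_min (mul_le_mul hs ?_ hr₀ hR.le) ?_
    · exact le_mul_of_one_le_left hr₀ (le_add_of_nonneg_right (by positivity))
    · rw [mul_comm]; gcongr
  calc h * r = √h * (√h * r) := by rw [← mul_assoc, Real.mul_self_sqrt hh₀]
    _ ≤ √h * (R * min ((1 + h * L) * r) √h) := by gcongr
    _ = R * (√h * min ((1 + h * L) * r) √h) := by ring

lemma mul_f₁Dist_le_sqrt_mul_min (hL : 0 < L) (hR : 0 < R) (hh₀ : 0 ≤ h) (hh : h ≤ h₀₁ L K R)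
    (hr₀ : 0 ≤ r) (hr : r ≤ r₁₁ L K R) : qConst L K R * h * f₁Dist (qConst L K R) (r₁₁ L K R) r ≤
      √h * min ((1 + h * L) * r) √h := by
  have hq := qConst_pos hL hR K
  set q := qConst L K R
  set f := f₁Dist q (r₁₁ L K R) r
  have hmin : q * √h * f ≤ min ((1 + h * L) * r) √h := by
    refine le_min ?_ ?_
    · calc q * √h * f ≤ 1 * r := by
            gcongr
            · exact (f₁Dist_zero (hr₀.trans hr)).symm.le.trans (monotone_f₁Dist hq _ hr₀)
            · linarith [qConst_mul_sqrt_le hL hR hh₀ hh]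
            · exact f₁Dist_le_self hq (hr₀.trans hr) r
        _ ≤ (1 + h * L) * r := by gcongr; exact le_add_of_nonneg_right (by positivity)
    · rw [mul_right_comm]
      exact mul_le_of_le_one_left (Real.sqrt_nonneg h) (mul_f₁Dist_le_one hq hr)
  calc q * h * f = √h * (q * √h * f) := by
        rw [show √h * (q * √h * f) = q * (√h * √h) * f by ring, Real.mul_self_sqrt hh₀]
    _ ≤ √h * min ((1 + h * L) * r) √h := by gcongr

lemma c₁Const_mul_f₁Dist_le (hL : 0 < L) (hR : 0 < R) (hh₀ : 0 ≤ h) (hh : h ≤ h₀₁ L K R)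
    (hr₀ : 0 ≤ r) (hr : r ≤ R) :
    c₁Const L K R * h * f₁Dist (qConst L K R) (r₁₁ L K R) r ≤
      35 / 24 * (L * R) * (Real.exp (-qConst L K R * r) * (√h * min ((1 + h * L) * r) √h)) := by
  have hq := qConst_pos hL hR K
  have hRr₁ : R ≤ r₁₁ L K R := R_le_r₁₁ hL hR (hh₀.trans hh)
  have hf₀ := f₁Dist_nonneg hq (hR.le.trans hRr₁) hr₀
  have hfm := mul_f₁Dist_le_sqrt_mul_min hL hR hh₀ hh hr₀ (hr.trans hRr₁)
  set q := qConst L K R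
  set f := f₁Dist q (r₁₁ L K R) r
  have hexp : Real.exp (-q * (7 / 6 * R)) ≤ Real.exp (-q * r) :=
    Real.exp_le_exp.2 (mul_le_mul_of_nonpos_left (by linarith) (neg_nonpos.2 hq.le))
  have hc₁ : c₁Const L K R ≤ 35 / 24 * (L * R * q) * Real.exp (-q * r) := by
    rw [c₁Const_eq]
    exact mul_le_mul (min_le_right _ _) hexp (Real.exp_nonneg _) (by positivity)
  calc c₁Const L K R * h * f ≤ 35 / 24 * (L * R * q) * Real.exp (-q * r) * h * f := by gcongr
    _ = 35 / 24 * (L * R) * (Real.exp (-q * r) * (q * h * f)) := by ring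
    _ ≤ _ := by gcongr

theorem mirrorMean_f₁Dist_le_of_le (hL : 0 < L) (hR : 0 < R) (hh₀ : 0 ≤ h) (hh : h ≤ h₀₁ L K R)
    (hr₀ : 0 ≤ r) (hr : r ≤ R) :
    mirrorMean (f₁Dist (qConst L K R) (r₁₁ L K R)) √h ((1 + h * L) * r) ≤
      (1 - c₁Const L K R * h) * f₁Dist (qConst L K R) (r₁₁ L K R) r := by
  have hq := qConst_pos hL hR K
  have hRr₁ : R ≤ r₁₁ L K R := R_le_r₁₁ hL hR (hh₀.trans hh)
  have hρ₀ : 0 ≤ (1 + h * L) * r := by positivity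
  have hm : 0 ≤ √h * min ((1 + h * L) * r) √h :=
    mul_nonneg (Real.sqrt_nonneg h) (le_min hρ₀ (Real.sqrt_nonneg h))
  have hmean := mirrorMean_f₁Dist_le_sub hq (Real.sqrt_nonneg h) hρ₀
    (max_le ((mul_R_le_r₁₁ hL hR hh).trans' (by gcongr))
      ((sqrt_le_of_le_h₀₁ hL hR hh).trans hRr₁))
  have htangent := f₁Dist_le_tangent hq (r₁₁ L K R) r ((1 + h * L) * r)
  have hloss := c₁Const_mul_f₁Dist_le hL hR hh₀ hh hr₀ hr
  have hexp := exp_le_exp_max_sqrt hL hR hh₀ hh hr₀ hr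
  have hdrift := mul_le_mul_sqrt_mul_min hL hR hh₀ hh hr₀ hr
  rw [f₁Slope_of_le (hr.trans hRr₁)] at htangent
  rw [qConst_mul_c₀] at hmean
  set E := Real.exp (-qConst L K R * r)
  set m := √h * min ((1 + h * L) * r) √h
  have hdrift' : E * ((1 + h * L) * r - r) ≤ L * R * (E * m) := by
    calc E * ((1 + h * L) * r - r) = L * E * (h * r) := by ring
      _ ≤ L * E * (R * m) := by gcongr
      _ = L * R * (E * m) := by ring
  have hgain : L * R * (24 / 31 * E * m) ≤
      L * R * (Real.exp (-qConst L K R * max ((1 + h * L) * r) √h) * m) := by gcongr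
  have hEm : 0 ≤ L * R * (E * m) := by positivity
  -- In units of `L * R * (E * m)`, the gain `7 / 2 * (24 / 31)` exceeds `1` (drift) plus `35 / 24`
  -- (contraction rate).
  linarith

theorem mirrorMean_f₁Dist_le_of_drift_le (hL : 0 < L) (hK : 0 < K) (hR : 0 < R) (hh₀ : 0 ≤ h)
    (hh : h ≤ h₀₁ L K R) (hr₀ : 0 ≤ r) (hρ₀ : 0 ≤ ρ) (hρ : ρ ≤ (1 - K * h / 2) * r) (s : ℝ) :
    mirrorMean (f₁Dist (qConst L K R) (r₁₁ L K R)) s ρ ≤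
      (1 - c₁Const L K R * h) * f₁Dist (qConst L K R) (r₁₁ L K R) r := by
  have hq := qConst_pos hL hR K
  have hr₁ : 0 ≤ r₁₁ L K R := hR.le.trans (R_le_r₁₁ hL hR (hh₀.trans hh))
  have hr₁_le : r₁₁ L K R ≤ 7 / 6 * R := r₁₁_le hL hR
  set q := qConst L K R
  set r₁ := r₁₁ L K R
  have hslope : Real.exp (-q * (7 / 6 * R)) ≤ f₁Slope q r₁ r :=
    Real.exp_le_exp.2 <| mul_le_mul_of_nonpos_left ((min_le_right _ _).trans hr₁_le)
      (neg_nonpos.2 hq.le)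
  have hc₁ : c₁Const L K R ≤ K / 2 * f₁Slope q r₁ r := by
    rw [c₁Const_eq]
    exact mul_le_mul (min_le_left _ _) hslope (Real.exp_nonneg _) (by positivity)
  have hloss : c₁Const L K R * h * f₁Dist q r₁ r ≤ K / 2 * f₁Slope q r₁ r * h * r := by
    have hf₀ := f₁Dist_nonneg hq hr₁ hr₀
    have hslope₀ : 0 ≤ f₁Slope q r₁ r := Real.exp_nonneg _
    gcongr
    exact f₁Dist_le_self hq hr₁ r
  calc mirrorMean (f₁Dist q r₁) s ρ ≤ f₁Dist q r₁ ρ := mirrorMean_f₁Dist_le hq hr₁ hρ₀ s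
    _ ≤ f₁Dist q r₁ ((1 - K * h / 2) * r) := monotone_f₁Dist hq r₁ hρ
    _ ≤ f₁Dist q r₁ r + f₁Slope q r₁ r * ((1 - K * h / 2) * r - r) :=
        f₁Dist_le_tangent hq r₁ r _
    _ ≤ (1 - c₁Const L K R * h) * f₁Dist q r₁ r := by linarith

end Contraction

/-- **Theorem (one-step contraction for the full mirror coupling, concave distance).**
Under the Lipschitz and contractivity-at-infinity assumptions on `b`, for every
`h ∈ (0, h₀¹)` and all `x, y`, the pair `(X', Y')` produced by the untruncated mirror
coupling satisfies `𝔼 f₁(‖X' - Y'‖) ≤ (1 - c₁ h) f₁(‖x - y‖)`. -/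
theorem mirror_coupling_contraction_concave
    {d : ℕ} (hd : 1 ≤ d) (b : EuclideanSpace ℝ (Fin d) → EuclideanSpace ℝ (Fin d))
    (L K R : ℝ) (hL : 0 < L) (hK : 0 < K) (hR : 0 < R)
    (hLip : ∀ x y : EuclideanSpace ℝ (Fin d), ‖b x - b y‖ ≤ L * ‖x - y‖)
    (hContr : ∀ x y : EuclideanSpace ℝ (Fin d), R < ‖x - y‖ →
      @inner ℝ _ _ (x - y) (b x - b y) ≤ -K * ‖x - y‖ ^ 2)
    {Ω : Type*} [MeasureSpace Ω] [IsProbabilityMeasure (ℙ : Measure Ω)]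
    (Z : Ω → EuclideanSpace ℝ (Fin d)) (ζ : Ω → ℝ)
    (hZmeas : Measurable Z) (hζmeas : Measurable ζ)
    (hZlaw : Measure.map Z ℙ = stdGaussian d)
    (hζlaw : Measure.map ζ ℙ = volume.restrict (Set.Icc (0:ℝ) 1))
    (hindep : IndepFun Z ζ ℙ)
    (h : ℝ) (hh : h ∈ Set.Ioo 0 (h₀₁ L K R))
    (x y : EuclideanSpace ℝ (Fin d)) :
    ∫ ω, f₁Dist (qConst L K R) (r₁₁ L K R)
        ‖(x + h • b x + Real.sqrt h • Z ω)
          - mirrorY d h (x + h • b x) (y + h • b y) (Z ω) (ζ ω)‖ ∂ℙ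
      ≤ (1 - c₁Const L K R * h) * f₁Dist (qConst L K R) (r₁₁ L K R) ‖x - y‖ := by
  obtain ⟨hh₀, hh₁⟩ := hh
  have hq := qConst_pos hL hR K
  have hr₁ := hR.le.trans (R_le_r₁₁ hL hR (hh₀.trans hh₁).le)
  have hdrift : x + h • b x - (y + h • b y) = (x - y) + h • (b x - b y) := by module
  rw [integral_comp_norm_sub_mirrorY hZmeas hζmeas hZlaw hζlaw hindep (f₁Dist_zero hr₁)
    (measurable_f₁Dist _ _) hh₀ (integrable_f₁Dist_comp hq hr₁ _ _), hdrift]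
  rcases le_or_gt ‖x - y‖ R with hnear | hfar
  · exact (monotone_mirrorMean_f₁Dist hq hr₁ _
      (norm_add_smul_le_of_norm_le hh₀.le (hLip x y))).trans
        (mirrorMean_f₁Dist_le_of_le hL hR hh₀.le hh₁.le (norm_nonneg _) hnear)
  · exact mirrorMean_f₁Dist_le_of_drift_le hL hK hR hh₀.le hh₁.le (norm_nonneg _) (norm_nonneg _)
      (norm_add_smul_le_of_inner_le hh₀.le (hLip x y) (mul_sq_le_of_le_h₀₁ hL hh₁.le)
        (hContr x y hfar)) _
end

section
/- Let d ≥ 1, h > 0 and m, H > 0, and let x̂, ŷ ∈ ℝ^d. Then the random vector Y' defined by the coupling construction from the points x̂, ŷ has the same law as ŷ + √h·Z, i.e. the d-dimensional Gaussian law N(ŷ, hI) (the product of one-dimensional Gaussians with means ŷᵢ and variance h). Consequently, the joint law of (X', Y') is a coupling of N(x̂, hI) and N(ŷ, hI). -/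
open scoped Classical
open MeasureTheory ProbabilityTheory Real

noncomputable section

/-- Gaussian measure `N(mean, v·I)` on `EuclideanSpace ℝ (Fin d)`: the product of
one-dimensional Gaussians with means `meanᵢ` and variance `v`. -/
def gaussianVec (d : ℕ) (mean : EuclideanSpace ℝ (Fin d)) (v : NNReal) :
    Measure (EuclideanSpace ℝ (Fin d)) :=
  (Measure.pi fun i : Fin d => gaussianReal (mean i) v).map
    (MeasurableEquiv.toLp 2 (Fin d → ℝ))

/-- The truncated Gaussian density `φ^m_{z,hI}(u) = 1_{|u-z| ≤ m} φ_{z,hI}(u)`. -/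
def gaussDensityTrunc (d : ℕ) (h m : ℝ) (z u : EuclideanSpace ℝ (Fin d)) : ℝ :=
  if ‖u - z‖ ≤ m then gaussDensity d h z u else 0

/-- Second component `Y'` of the truncated mirror coupling with parameters `m, H`,
as a function of the points `x̂, ŷ`, the Gaussian input `z` and the uniform input `t`.
The first component is `X' = x̂ + √h • z`. -/
def couplingY (d : ℕ) (h m H : ℝ) (xh yh : EuclideanSpace ℝ (Fin d))
    (z : EuclideanSpace ℝ (Fin d)) (t : ℝ) : EuclideanSpace ℝ (Fin d) :=
  if ‖Real.sqrt h • z‖ < m ∧ ‖xh - yh‖ ≤ H then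
    (if t ≤ min (gaussDensityTrunc d h m yh (xh + Real.sqrt h • z))
              (gaussDensityTrunc d h m xh (xh + Real.sqrt h • z))
            / gaussDensityTrunc d h m xh (xh + Real.sqrt h • z)
      then xh + Real.sqrt h • z
      else yh + Real.sqrt h • reflect d xh yh z)
  else yh + Real.sqrt h • z

end

/-!
Inside the ball `‖X' - x̂‖ < m` the construction is a maximal coupling. The reflection in the
perpendicular bisector of `x̂` and `ŷ` preserves volume and exchanges the two truncated densities
`f` and `g`. Accepted samples contribute `min f g` to the law of `Y'`, and the reflection carries
the excess `(f - g)⁺` of the rejected ones onto `(g - f)⁺`, which is exactly what `min f g` lacks to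
be `g`. Outside the ball, translation by `ŷ - x̂` carries the tail of one law to the tail of the
other. The densities are truncated to closed balls and the coupling switches on the open one, which
is harmless because spheres of nonzero radius are null sets. Of the Gaussian density only its
rotation invariance matters.
-/

open Metric
open scoped ENNReal NNReal InnerProductSpace

/-! ### Push-forwards of densities and of mixtures -/

section Mixture

variable {α β : Type*} [MeasurableSpace α] [MeasurableSpace β]

lemma map_withDensity_comp {μ : Measure α} {ν : Measure β} {T : α → β}
    (hT : MeasurePreserving T μ ν) {f : β → ℝ≥0∞} (hf : Measurable f) :
    (μ.withDensity fun x => f (T x)).map T = ν.withDensity f := by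
  ext s hs
  rw [Measure.map_apply hT.measurable hs, withDensity_apply _ (hT.measurable hs),
    withDensity_apply _ hs, hT.setLIntegral_comp_preimage hs hf]

lemma map_ite_eq_map_restrict_add (μ : Measure α) {p : α → Prop} [DecidablePred p]
    (hp : MeasurableSet {x | p x}) {f g : α → β} (hf : Measurable f) (hg : Measurable g) :
    μ.map (fun x => if p x then f x else g x)
      = (μ.restrict {x | p x}).map f + (μ.restrict {x | p x}ᶜ).map g := by
  conv_lhs => rw [← Measure.restrict_add_restrict_compl (μ := μ) hp]
  rw [Measure.map_add _ _ (hf.ite hp hg)]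
  congr 1
  · refine Measure.map_congr ?_
    filter_upwards [ae_restrict_mem hp] with x hx using if_pos hx
  · refine Measure.map_congr ?_
    filter_upwards [ae_restrict_mem hp.compl] with x hx using if_neg hx

lemma map_prod_ite_fst_mem {γ : Type*} [MeasurableSpace γ] (μ : Measure α) [SFinite μ]
    (ν : Measure γ) [SFinite ν] {s : Set α} [DecidablePred (· ∈ s)] (hs : MeasurableSet s)
    {f g : α × γ → β} (hf : Measurable f) (hg : Measurable g) :
    (μ.prod ν).map (fun p => if p.1 ∈ s then f p else g p)
      = ((μ.restrict s).prod ν).map f + ((μ.restrict sᶜ).prod ν).map g := by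
  rw [Measure.restrict_prod_eq_prod_univ, Measure.restrict_prod_eq_prod_univ, Set.prod_univ,
    Set.prod_univ]
  exact map_ite_eq_map_restrict_add _ (measurable_fst hs) hf hg

lemma map_fst_restrict_prod (μ : Measure α) (ν : Measure β) [SFinite ν] {s : Set (α × β)}
    (hs : MeasurableSet s) :
    ((μ.prod ν).restrict s).map Prod.fst = μ.withDensity fun x => ν (Prod.mk x ⁻¹' s) := by
  ext t ht
  rw [Measure.map_apply measurable_fst ht, Measure.restrict_apply (measurable_fst ht),
    Measure.prod_apply ((measurable_fst ht).inter hs), withDensity_apply _ ht,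
    ← lintegral_indicator ht]
  refine lintegral_congr fun x => ?_
  by_cases hx : x ∈ t <;> simp [hx, Set.preimage_inter, Set.preimage_preimage]

/-- The uniform distribution on `[0, 1]`, the law of the acceptance variable `ζ`. -/
noncomputable def uniform01 : Measure ℝ := volume.restrict (Set.Icc 0 1)

instance : IsProbabilityMeasure uniform01 := ⟨by simp [uniform01]⟩

lemma uniform01_Iic {a : ℝ} (ha : a ≤ 1) : uniform01 (Set.Iic a) = ENNReal.ofReal a := by
  have : Set.Iic a ∩ Set.Icc 0 1 = Set.Icc 0 a := by grind
  rw [uniform01, Measure.restrict_apply measurableSet_Iic, this, Real.volume_Icc, sub_zero]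

lemma uniform01_Ioi {a : ℝ} (ha : 0 ≤ a) : uniform01 (Set.Ioi a) = ENNReal.ofReal (1 - a) := by
  have : Set.Ioi a ∩ Set.Icc 0 1 = Set.Ioc a 1 := by grind
  rw [uniform01, Measure.restrict_apply measurableSet_Ioi, this, Real.volume_Ioc]

lemma map_prod_uniform01_ite (μ : Measure α) {a : α → ℝ} (ha : Measurable a)
    (ha_mem : ∀ x, a x ∈ Set.Icc 0 1) {f g : α → β} (hf : Measurable f) (hg : Measurable g) :
    (μ.prod uniform01).map (fun p => if p.2 ≤ a p.1 then f p.1 else g p.1)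
      = (μ.withDensity fun x => ENNReal.ofReal (a x)).map f
        + (μ.withDensity fun x => ENNReal.ofReal (1 - a x)).map g := by
  have hs : MeasurableSet {p : α × ℝ | p.2 ≤ a p.1} := measurableSet_le (by fun_prop) (by fun_prop)
  have accepted (x : α) : uniform01 (Prod.mk x ⁻¹' {p : α × ℝ | p.2 ≤ a p.1})
      = ENNReal.ofReal (a x) := uniform01_Iic (ha_mem x).2
  have rejected (x : α) : uniform01 (Prod.mk x ⁻¹' {p : α × ℝ | p.2 ≤ a p.1}ᶜ)
      = ENNReal.ofReal (1 - a x) := by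
    rw [← uniform01_Ioi (ha_mem x).1]
    congr 1
    ext t
    simp
  refine (map_ite_eq_map_restrict_add (p := fun p : α × ℝ => p.2 ≤ a p.1) _ hs
    (hf.comp measurable_fst) (hg.comp measurable_fst)).trans ?_
  rw [← Measure.map_map hf measurable_fst, ← Measure.map_map hg measurable_fst,
    map_fst_restrict_prod _ _ hs, map_fst_restrict_prod _ _ hs.compl]
  simp only [accepted, rejected]

end Mixture

/-! ### Maximal coupling of two densities exchanged by a measure-preserving map -/

section MaximalCoupling

variable {α : Type*}

/-- The probability with which the maximal coupling of the densities `f` and `g` keeps a sample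
`u` of `f`. Where `f u = 0`, division by zero makes it `0`. -/
noncomputable def acceptProb (f g : α → ℝ) (u : α) : ℝ := min (g u) (f u) / f u

variable {f g : α → ℝ}

lemma acceptProb_mem_Icc (hf : 0 ≤ f) (hg : 0 ≤ g) (u : α) : acceptProb f g u ∈ Set.Icc 0 1 :=
  ⟨div_nonneg (le_min (hg u) (hf u)) (hf u), div_le_one_of_le₀ (min_le_right _ _) (hf u)⟩

lemma mul_acceptProb (hg : 0 ≤ g) (u : α) : f u * acceptProb f g u = min (g u) (f u) :=
  mul_div_cancel_of_imp' fun hfu => by rw [hfu]; exact min_eq_right (hg u)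

lemma ofReal_min_add_ofReal_sub {a b : ℝ} (ha : 0 ≤ a) :
    ENNReal.ofReal (min b a) + ENNReal.ofReal (b - a) = ENNReal.ofReal b := by
  rcases le_total a b with hab | hba
  · rw [min_eq_right hab, ← ENNReal.ofReal_add ha (sub_nonneg.2 hab), add_sub_cancel]
  · rw [min_eq_left hba, ENNReal.ofReal_of_nonpos (sub_nonpos.2 hba), add_zero]

variable [MeasurableSpace α]

lemma measurable_acceptProb (hf : Measurable f) (hg : Measurable g) :
    Measurable (acceptProb f g) :=
  (hg.min hf).div hf

lemma withDensity_acceptProb {ν : Measure α} (hf : Measurable f) (hg : Measurable g) (hf₀ : 0 ≤ f)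
    (hg₀ : 0 ≤ g) :
    (ν.withDensity fun u => ENNReal.ofReal (f u)).withDensity
        (fun u => ENNReal.ofReal (acceptProb f g u))
      = ν.withDensity fun u => ENNReal.ofReal (min (g u) (f u)) := by
  rw [← withDensity_mul _ hf.ennreal_ofReal (measurable_acceptProb hf hg).ennreal_ofReal]
  congr 1 with u
  rw [Pi.mul_apply, ← ENNReal.ofReal_mul (hf₀ u), mul_acceptProb hg₀]

lemma withDensity_one_sub_acceptProb {ν : Measure α} (hf : Measurable f) (hg : Measurable g)
    (hf₀ : 0 ≤ f) (hg₀ : 0 ≤ g) :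
    (ν.withDensity fun u => ENNReal.ofReal (f u)).withDensity
        (fun u => ENNReal.ofReal (1 - acceptProb f g u))
      = ν.withDensity fun u => ENNReal.ofReal (f u - g u) := by
  rw [← withDensity_mul _ hf.ennreal_ofReal
    ((measurable_acceptProb hf hg).const_sub 1).ennreal_ofReal]
  congr 1 with u
  rw [Pi.mul_apply, ← ENNReal.ofReal_mul (hf₀ u), mul_one_sub, mul_acceptProb hg₀]
  rcases le_total (f u) (g u) with hfg | hgf
  · rw [min_eq_right hfg, sub_self, ENNReal.ofReal_zero,
      ENNReal.ofReal_of_nonpos (sub_nonpos.2 hfg)]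
  · rw [min_eq_left hgf]

/-- The second component of the maximal coupling of the densities `f` and `g`, as a function of a
sample `p.1` of `f` and an independent uniform variable `p.2`: the sample is kept with probability
`acceptProb f g p.1` and moved by `T` otherwise. -/
noncomputable def maximalCoupling (f g : α → ℝ) (T : α → α) (p : α × ℝ) : α :=
  if p.2 ≤ acceptProb f g p.1 then p.1 else T p.1

lemma measurable_maximalCoupling (hf : Measurable f) (hg : Measurable g) {T : α → α}
    (hT : Measurable T) : Measurable (maximalCoupling f g T) :=
  Measurable.ite
    (measurableSet_le measurable_snd ((measurable_acceptProb hf hg).comp measurable_fst))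
    measurable_fst (hT.comp measurable_fst)

lemma map_maximalCoupling {ν : Measure α} (hf : Measurable f) (hg : Measurable g) (hf₀ : 0 ≤ f)
    (hg₀ : 0 ≤ g) {T : α → α} (hT : MeasurePreserving T ν ν) (hfT : ∀ u, f (T u) = g u)
    (hgT : ∀ u, g (T u) = f u) :
    ((ν.withDensity fun u => ENNReal.ofReal (f u)).prod uniform01).map (maximalCoupling f g T)
      = ν.withDensity fun u => ENNReal.ofReal (g u) := by
  have moved : (ν.withDensity fun u => ENNReal.ofReal (f u - g u)).map T
      = ν.withDensity fun u => ENNReal.ofReal (g u - f u) := by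
    simpa only [Pi.sub_apply, hfT, hgT] using map_withDensity_comp hT (hg.sub hf).ennreal_ofReal
  calc _ = (ν.withDensity fun u => ENNReal.ofReal (min (g u) (f u))).map id
        + (ν.withDensity fun u => ENNReal.ofReal (f u - g u)).map T := by
        rw [← withDensity_acceptProb hf hg hf₀ hg₀, ← withDensity_one_sub_acceptProb hf hg hf₀ hg₀]
        exact map_prod_uniform01_ite _ (measurable_acceptProb hf hg) (acceptProb_mem_Icc hf₀ hg₀)
          measurable_id hT.measurable
    _ = ν.withDensity ((fun u => ENNReal.ofReal (min (g u) (f u)))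
          + fun u => ENNReal.ofReal (g u - f u)) := by
        rw [Measure.map_id, moved, withDensity_add_left (hg.min hf).ennreal_ofReal]
    _ = _ := by
        congr 1 with u
        exact ofReal_min_add_ofReal_sub (hf₀ u)

end MaximalCoupling

/-! ### Truncated mirror coupling of radial distributions -/

section Mirror

variable {E : Type*} [NormedAddCommGroup E] [InnerProductSpace ℝ E]

/-- The reflection of `E` in the perpendicular bisector of `x` and `y`, in the form in which the
coupling uses it: the displacement from `x` is reflected and attached to `y`. For `x = y` it is the
identity, as `(ℝ ∙ 0)ᗮ = ⊤`. -/
noncomputable def mirror (x y u : E) : E := y + (ℝ ∙ (x - y))ᗮ.reflection (u - x)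

lemma norm_mirror_sub_right (x y u : E) : ‖mirror x y u - y‖ = ‖u - x‖ := by
  rw [mirror, add_sub_cancel_left, LinearIsometryEquiv.norm_map]

lemma norm_mirror_sub_left (x y u : E) : ‖mirror x y u - x‖ = ‖u - y‖ := by
  have swap : (ℝ ∙ (x - y))ᗮ.reflection (x - y) = y - x := by
    rw [Submodule.reflection_orthogonalComplement_singleton_eq_neg, neg_sub]
  have : mirror x y u - x = (ℝ ∙ (x - y))ᗮ.reflection (u - y) := by
    rw [← sub_add_sub_cancel u x y, map_add, swap, mirror]
    abel
  rw [this, LinearIsometryEquiv.norm_map]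

variable [FiniteDimensional ℝ E] [MeasurableSpace E] [BorelSpace E]

lemma measurePreserving_const_add_sub (x y : E) : MeasurePreserving (fun u : E => y + (u - x)) :=
  (measurePreserving_add_left volume y).comp (measurePreserving_sub_right volume x)

lemma measurePreserving_mirror (x y : E) : MeasurePreserving (mirror x y) :=
  (measurePreserving_add_left volume y).comp
    ((LinearIsometryEquiv.measurePreserving _).comp (measurePreserving_sub_right volume x))

/-- The rotation-invariant measure around `x` with density `u ↦ ρ ‖u - x‖`; only the values of `ρ`
on `[0, ∞)` matter. -/
noncomputable def radialMeasure (ρ : ℝ → ℝ) (x : E) : Measure E :=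
  volume.withDensity fun u => ENNReal.ofReal (ρ ‖u - x‖)

instance (ρ : ℝ → ℝ) (x : E) : SFinite (radialMeasure ρ x) :=
  inferInstanceAs (SFinite (volume.withDensity _))

variable {ρ : ℝ → ℝ}

lemma map_translate_radialMeasure (hρ : Measurable ρ) (x y : E) :
    (radialMeasure ρ x).map (fun u => y + (u - x)) = radialMeasure ρ y := by
  have hf : Measurable fun u : E => ENNReal.ofReal (ρ ‖u - y‖) := by fun_prop
  simpa only [add_sub_cancel_left, radialMeasure]
    using map_withDensity_comp (measurePreserving_const_add_sub x y) hf

lemma map_translate_restrict_ball_compl (hρ : Measurable ρ) (x y : E) (m : ℝ) :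
    ((radialMeasure ρ x).restrict (ball x m)ᶜ).map (fun u => y + (u - x))
      = (radialMeasure ρ y).restrict (ball y m)ᶜ := by
  have preimage_compl : (fun u => y + (u - x)) ⁻¹' (ball y m)ᶜ = (ball x m)ᶜ := by
    ext u
    simp [dist_eq_norm]
  rw [← map_translate_radialMeasure hρ x y, Measure.restrict_map (by fun_prop)
    measurableSet_ball.compl, preimage_compl]

lemma closedBall_ae_eq_ball_of_ne_zero (x : E) {m : ℝ} (hm : m ≠ 0) :
    closedBall x m =ᵐ[volume] ball x m := by
  rw [← ball_union_sphere]
  exact union_ae_eq_left_of_ae_eq_empty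
    (ae_eq_empty.2 (Measure.addHaar_sphere_of_ne_zero volume x hm))

lemma radialMeasure_indicator_Iic (ρ : ℝ → ℝ) (x : E) {m : ℝ} (hm : m ≠ 0) :
    radialMeasure ((Set.Iic m).indicator ρ) x = (radialMeasure ρ x).restrict (ball x m) := by
  have truncated_density : (fun u : E => ENNReal.ofReal ((Set.Iic m).indicator ρ ‖u - x‖))
      = (closedBall x m).indicator fun u => ENNReal.ofReal (ρ ‖u - x‖) := by
    ext u
    simp only [Set.indicator_apply, Set.mem_Iic, mem_closedBall_iff_norm, apply_ite ENNReal.ofReal,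
      ENNReal.ofReal_zero]
  rw [radialMeasure, truncated_density, withDensity_indicator isClosed_closedBall.measurableSet,
    Measure.restrict_congr_set (closedBall_ae_eq_ball_of_ne_zero x hm), radialMeasure,
    restrict_withDensity isOpen_ball.measurableSet]

lemma map_maximalCoupling_mirror (hρ : Measurable ρ) (hρ₀ : 0 ≤ ρ) (x y : E) :
    ((radialMeasure ρ x).prod uniform01).map
        (maximalCoupling (fun u => ρ ‖u - x‖) (fun u => ρ ‖u - y‖) (mirror x y))
      = radialMeasure ρ y :=
  map_maximalCoupling (f := fun u => ρ ‖u - x‖) (g := fun u => ρ ‖u - y‖)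
    (by fun_prop) (by fun_prop) (fun _ => hρ₀ _) (fun _ => hρ₀ _)
    (measurePreserving_mirror x y)
    (fun u => by rw [norm_mirror_sub_left]) (fun u => by rw [norm_mirror_sub_right])

lemma measurable_maximalCoupling_mirror (hρ : Measurable ρ) (x y : E) :
    Measurable (maximalCoupling (fun u => ρ ‖u - x‖) (fun u => ρ ‖u - y‖) (mirror x y)) :=
  measurable_maximalCoupling (by fun_prop) (by fun_prop) (measurePreserving_mirror x y).measurable

/-- The second component of the mirror coupling of the radial measures around `x` and `y`, as a
function of the sample `p.1` around `x` and the uniform variable `p.2`. Within distance `m` of `x`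
it is the maximal coupling of the densities truncated at radius `m`; farther away it is a
translation. -/
noncomputable def truncatedMirrorCoupling (ρ : ℝ → ℝ) (m : ℝ) (x y : E) (p : E × ℝ) : E :=
  if p.1 ∈ ball x m then
    maximalCoupling (fun u => (Set.Iic m).indicator ρ ‖u - x‖)
      (fun u => (Set.Iic m).indicator ρ ‖u - y‖) (mirror x y) p
  else y + (p.1 - x)

lemma measurable_truncatedMirrorCoupling (hρ : Measurable ρ) (m : ℝ) (x y : E) :
    Measurable (truncatedMirrorCoupling ρ m x y) :=
  Measurable.ite (measurable_fst measurableSet_ball)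
    (measurable_maximalCoupling_mirror (hρ.indicator measurableSet_Iic) x y) (by fun_prop)

theorem map_truncatedMirrorCoupling (hρ : Measurable ρ) (hρ₀ : 0 ≤ ρ) {m : ℝ} (hm : m ≠ 0)
    (x y : E) :
    ((radialMeasure ρ x).prod uniform01).map (truncatedMirrorCoupling ρ m x y)
      = radialMeasure ρ y := by
  have near : (((radialMeasure ρ x).restrict (ball x m)).prod uniform01).map
        (maximalCoupling (fun u => (Set.Iic m).indicator ρ ‖u - x‖)
          (fun u => (Set.Iic m).indicator ρ ‖u - y‖) (mirror x y))
      = (radialMeasure ρ y).restrict (ball y m) := by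
    rw [← radialMeasure_indicator_Iic ρ x hm, ← radialMeasure_indicator_Iic ρ y hm]
    exact map_maximalCoupling_mirror (hρ.indicator measurableSet_Iic)
      (Set.indicator_nonneg fun r _ => hρ₀ r) x y
  have far : (((radialMeasure ρ x).restrict (ball x m)ᶜ).prod uniform01).map
        (fun p => y + (p.1 - x))
      = (radialMeasure ρ y).restrict (ball y m)ᶜ := by
    rw [← map_translate_restrict_ball_compl hρ x y,
      ← Function.comp_def (fun u => y + (u - x)),
      ← Measure.map_map (by fun_prop) measurable_fst, Measure.map_fst_prod, measure_univ, one_smul]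
  refine (map_prod_ite_fst_mem _ _ measurableSet_ball
    (measurable_maximalCoupling_mirror (hρ.indicator measurableSet_Iic) x y) (by fun_prop)).trans ?_
  rw [near, far, Measure.restrict_add_restrict_compl measurableSet_ball]

end Mirror

/-! ### The Gaussian case -/

section Gaussian

lemma pi_withDensity_ofReal {ι : Type*} [Fintype ι] {α : ι → Type*} [∀ i, MeasurableSpace (α i)]
    (μ : ∀ i, Measure (α i)) [∀ i, SigmaFinite (μ i)] {f : ∀ i, α i → ℝ}
    (hf : ∀ i, Integrable (f i) (μ i)) (hf₀ : ∀ i, 0 ≤ f i) :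
    (Measure.pi fun i => (μ i).withDensity fun x => ENNReal.ofReal (f i x))
      = (Measure.pi μ).withDensity fun x => ENNReal.ofReal (∏ i, f i (x i)) := by
  have (i : ι) : IsFiniteMeasure ((μ i).withDensity fun x => ENNReal.ofReal (f i x)) :=
    isFiniteMeasure_withDensity_ofReal (hf i).2
  refine Measure.pi_eq fun s hs => ?_
  rw [withDensity_apply _ (MeasurableSet.univ_pi hs), Measure.restrict_pi_pi,
    ← ofReal_integral_eq_lintegral_ofReal
      (Integrable.fintype_prod_dep fun i => (hf i).restrict)
      (.of_forall fun x => Finset.prod_nonneg fun i _ => hf₀ i (x i)),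
    integral_fintype_prod_eq_prod,
    ENNReal.ofReal_prod_of_nonneg fun i _ => integral_nonneg (hf₀ i)]
  refine Finset.prod_congr rfl fun i _ => ?_
  rw [withDensity_apply _ (hs i),
    ofReal_integral_eq_lintegral_ofReal (hf i).restrict (.of_forall (hf₀ i))]

/-- The profile of `gaussDensity d h`: its value at distance `r` from the mean. -/
noncomputable def gaussProfile (d : ℕ) (h r : ℝ) : ℝ :=
  (2 * π * h) ^ (-(d : ℝ) / 2) * Real.exp (-r ^ 2 / (2 * h))

lemma measurable_gaussProfile (d : ℕ) (h : ℝ) : Measurable (gaussProfile d h) := by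
  unfold gaussProfile
  fun_prop

lemma gaussProfile_nonneg (d : ℕ) {h : ℝ} (hh : 0 ≤ h) : 0 ≤ gaussProfile d h := fun r => by
  unfold gaussProfile
  positivity

variable {d : ℕ}

lemma gaussDensityTrunc_eq_indicator (h m : ℝ) (x u : EuclideanSpace ℝ (Fin d)) :
    gaussDensityTrunc d h m x u = (Set.Iic m).indicator (gaussProfile d h) ‖u - x‖ := by
  simp only [gaussDensityTrunc, gaussDensity, gaussProfile, Set.indicator_apply, Set.mem_Iic]

lemma prod_gaussianPDFReal (x u : EuclideanSpace ℝ (Fin d)) (v : ℝ≥0) :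
    ∏ i, gaussianPDFReal (x i) v (u i) = gaussProfile d v ‖u - x‖ := by
  have normalization : ∏ _i : Fin d, (√(2 * π * v))⁻¹ = (2 * π * v) ^ (-(d : ℝ) / 2) := by
    rw [Finset.prod_const, Finset.card_univ, Fintype.card_fin, Real.sqrt_eq_rpow,
      ← Real.rpow_neg (by positivity), ← Real.rpow_mul_natCast (by positivity)]
    congr 1
    ring
  have exponent : ∑ i, -(u i - x i) ^ 2 / (2 * v) = -‖u - x‖ ^ 2 / (2 * v) := by
    simp only [EuclideanSpace.real_norm_sq_eq, PiLp.sub_apply, ← Finset.sum_div,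
      Finset.sum_neg_distrib]
  simp only [gaussianPDFReal, gaussProfile, Finset.prod_mul_distrib, ← Real.exp_sum, exponent,
    normalization]

lemma pi_gaussianReal_eq_withDensity (x : EuclideanSpace ℝ (Fin d)) {v : ℝ≥0} (hv : v ≠ 0) :
    (Measure.pi fun i => gaussianReal (x i) v)
      = volume.withDensity fun u =>
          ENNReal.ofReal (gaussProfile d v ‖MeasurableEquiv.toLp 2 (Fin d → ℝ) u - x‖) := by
  simp only [gaussianReal_of_var_ne_zero _ hv, gaussianPDF_def, ← prod_gaussianPDFReal]
  exact pi_withDensity_ofReal _ (fun i => integrable_gaussianPDFReal _ _)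
    fun i => gaussianPDFReal_nonneg _ _

lemma gaussianVec_eq_radialMeasure (x : EuclideanSpace ℝ (Fin d)) {h : ℝ} (hh : 0 < h) :
    gaussianVec d x h.toNNReal = radialMeasure (gaussProfile d h) x := by
  have toLp_preserving : MeasurePreserving (MeasurableEquiv.toLp 2 (Fin d → ℝ)) :=
    PiLp.volume_preserving_toLp (Fin d)
  rw [gaussianVec, pi_gaussianReal_eq_withDensity x (Real.toNNReal_pos.2 hh).ne',
    Real.coe_toNNReal h hh.le, radialMeasure]
  exact map_withDensity_comp toLp_preserving
    (f := fun u => ENNReal.ofReal (gaussProfile d h ‖u - x‖))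
    ((measurable_gaussProfile d h).comp (by fun_prop)).ennreal_ofReal

lemma gaussianReal_map_affine (a c : ℝ) :
    (gaussianReal 0 1).map (fun s => a + c * s) = gaussianReal a (c ^ 2).toNNReal := by
  rw [← Function.comp_def (fun s => a + s), ← Measure.map_map (by fun_prop) (by fun_prop),
    gaussianReal_map_const_mul, gaussianReal_map_const_add, mul_zero, zero_add, mul_one,
    Real.toNNReal_of_nonneg (sq_nonneg c)]

lemma map_affine_stdGaussian (x : EuclideanSpace ℝ (Fin d)) (c : ℝ) :
    (_root_.stdGaussian d).map (fun z => x + c • z) = gaussianVec d x (c ^ 2).toNNReal := by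
  simp only [gaussianVec, ← gaussianReal_map_affine]
  rw [_root_.stdGaussian, ← Measure.pi_map_pi (fun i => by fun_prop),
    Measure.map_map (by fun_prop) (by fun_prop), Measure.map_map (by fun_prop) (by fun_prop)]
  rfl

lemma reflect_eq_reflection (x y u : EuclideanSpace ℝ (Fin d)) :
    reflect d x y u = (ℝ ∙ (x - y))ᗮ.reflection u := by
  rcases eq_or_ne x y with rfl | hxy
  · simp [reflect, Submodule.reflection_mem_subspace_eq_self]
  · rw [Submodule.reflection_orthogonal_apply, Submodule.reflection_singleton_apply, neg_sub,
      reflect, if_neg hxy, real_inner_smul_left, smul_smul, ← Nat.cast_smul_eq_nsmul ℝ, smul_smul]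
    congr 2
    push_cast
    simp only [RCLike.ofReal_real_eq_id, id]
    field_simp

lemma couplingY_of_le {h m H : ℝ} {x y : EuclideanSpace ℝ (Fin d)} (hxy : ‖x - y‖ ≤ H)
    (z : EuclideanSpace ℝ (Fin d)) (t : ℝ) :
    couplingY d h m H x y z t
      = truncatedMirrorCoupling (gaussProfile d h) m x y (x + √h • z, t) := by
  simp only [couplingY, truncatedMirrorCoupling, mem_ball_iff_norm, maximalCoupling, acceptProb,
    mirror, hxy, and_true, add_sub_cancel_left, map_smul, reflect_eq_reflection,
    gaussDensityTrunc_eq_indicator]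

lemma couplingY_of_lt {h m H : ℝ} {x y : EuclideanSpace ℝ (Fin d)} (hxy : H < ‖x - y‖)
    (z : EuclideanSpace ℝ (Fin d)) (t : ℝ) :
    couplingY d h m H x y z t = y + √h • z :=
  if_neg fun hr => hxy.not_ge hr.2

end Gaussian

/-- **Theorem (the construction is a coupling of the two Gaussian laws).**
The random vector `Y'` defined by the coupling construction from the points `x̂, ŷ` has law
`N(ŷ, hI)`; consequently the joint law of `(X', Y')` is a coupling of `N(x̂, hI)` and
`N(ŷ, hI)` (both marginals are the respective Gaussians). -/
theorem couplingY_law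
    {d : ℕ} (hd : 1 ≤ d) (h m H : ℝ) (hh : 0 < h) (hm : 0 < m) (hH : 0 < H)
    (xh yh : EuclideanSpace ℝ (Fin d))
    {Ω : Type*} [MeasureSpace Ω] [IsProbabilityMeasure (ℙ : Measure Ω)]
    (Z : Ω → EuclideanSpace ℝ (Fin d)) (ζ : Ω → ℝ)
    (hZmeas : Measurable Z) (hζmeas : Measurable ζ)
    (hZlaw : Measure.map Z ℙ = stdGaussian d)
    (hζlaw : Measure.map ζ ℙ = volume.restrict (Set.Icc (0:ℝ) 1))
    (hindep : IndepFun Z ζ ℙ) :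
    Measure.map (fun ω => couplingY d h m H xh yh (Z ω) (ζ ω)) ℙ
        = gaussianVec d yh h.toNNReal
      ∧ Measure.map (fun ω => xh + Real.sqrt h • Z ω) ℙ
        = gaussianVec d xh h.toNNReal := by
  have gaussian_step (x : EuclideanSpace ℝ (Fin d)) :
      Measure.map (fun ω => x + √h • Z ω) ℙ = gaussianVec d x h.toNNReal := by
    rw [← Function.comp_def (fun z => x + √h • z), ← Measure.map_map (by fun_prop) hZmeas, hZlaw,
      map_affine_stdGaussian, Real.sq_sqrt hh.le]
  refine ⟨?_, gaussian_step xh⟩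
  rcases lt_or_ge H ‖xh - yh‖ with hr | hr
  · simpa only [couplingY_of_lt hr] using gaussian_step yh
  · have joint_law : Measure.map (fun ω => (xh + √h • Z ω, ζ ω)) ℙ
        = (gaussianVec d xh h.toNNReal).prod uniform01 := by
      have indep : IndepFun (fun ω => xh + √h • Z ω) ζ ℙ :=
        hindep.comp (φ := fun z => xh + √h • z) (ψ := id) (by fun_prop) measurable_id
      rw [indep.map_prod_eq_prod_map_map (by fun_prop) hζmeas.aemeasurable, gaussian_step, hζlaw,
        uniform01]
    have hρ := measurable_gaussProfile d h
    simp only [couplingY_of_le hr]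
    rw [gaussianVec_eq_radialMeasure yh hh, ← map_truncatedMirrorCoupling hρ
      (gaussProfile_nonneg d hh.le) hm.ne' xh yh, ← gaussianVec_eq_radialMeasure xh hh, ← joint_law,
      Measure.map_map (measurable_truncatedMirrorCoupling hρ m xh yh) (by fun_prop)]
    rfl
end

section
/- Let d ≥ 1 and let b : ℝ^d → ℝ^d satisfy Assumptions (A). Then for every h with 0 < h ≤ K/L² and all x, y ∈ ℝ^d with |x − y| > R, the deterministic Euler drift step contracts the distance: |x − y + h(b(x) − b(y))| ≤ (1 − hK/2)·|x − y|. -/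
/-!
Put `u = x - y` and `v = b x - b y`. Expanding the square and using both assumptions on `b`,
`‖u + h v‖² ≤ (1 - 2hK + h²L²) ‖u‖²`. Since `h L² ≤ K`, the quadratic term absorbs at most half of
the linear gain, leaving `‖u + h v‖² ≤ (1 - hK) ‖u‖²`, and `√(1 - hK) ≤ 1 - hK/2`.
-/

theorem le_one_sub_half_mul_of_sq_le {𝕜 : Type*} [Field 𝕜] [LinearOrder 𝕜] [IsStrictOrderedRing 𝕜]
    {a r t : 𝕜} (hr : 0 ≤ r) (h : a ^ 2 ≤ (1 - t) * r ^ 2) : a ≤ (1 - t / 2) * r := by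
  obtain rfl | hr := hr.eq_or_lt
  · have ha : a ^ 2 ≤ 0 := by simpa using h
    simp [sq_nonpos_iff a |>.1 ha]
  · have ht : 0 ≤ 1 - t := nonneg_of_mul_nonneg_left ((sq_nonneg a).trans h) (by positivity)
    refine le_of_sq_le_sq ?_ (mul_nonneg (by linarith) hr.le)
    calc
      a ^ 2 ≤ (1 - t) * r ^ 2 := h
      _ ≤ (1 - t) * r ^ 2 + (t / 2 * r) ^ 2 := le_add_of_nonneg_right (sq_nonneg _)
      _ = ((1 - t / 2) * r) ^ 2 := by ring

section InnerProductSpace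

variable {E : Type*} [SeminormedAddCommGroup E] [InnerProductSpace ℝ E] {u v : E} {L K h : ℝ}

theorem norm_add_smul_sq_le_of_inner_le (hh : 0 ≤ h) (hnorm : ‖v‖ ≤ L * ‖u‖)
    (hinner : inner ℝ u v ≤ -K * ‖u‖ ^ 2) :
    ‖u + h • v‖ ^ 2 ≤ (1 - 2 * (h * K) + h ^ 2 * L ^ 2) * ‖u‖ ^ 2 :=
  calc
    ‖u + h • v‖ ^ 2 = ‖u‖ ^ 2 + 2 * (h * inner ℝ u v) + h ^ 2 * ‖v‖ ^ 2 := by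
      rw [norm_add_sq_real, real_inner_smul_right, norm_smul, mul_pow, Real.norm_eq_abs, sq_abs]
    _ ≤ ‖u‖ ^ 2 + 2 * (h * (-K * ‖u‖ ^ 2)) + h ^ 2 * (L * ‖u‖) ^ 2 := by gcongr
    _ = (1 - 2 * (h * K) + h ^ 2 * L ^ 2) * ‖u‖ ^ 2 := by ring

theorem euler_drift_step_contraction_general (hh : 0 ≤ h) (hhK : h * L ^ 2 ≤ K)
    (hnorm : ‖v‖ ≤ L * ‖u‖) (hinner : inner ℝ u v ≤ -K * ‖u‖ ^ 2) :
    ‖u + h • v‖ ≤ (1 - h * K / 2) * ‖u‖ := by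
  refine le_one_sub_half_mul_of_sq_le (norm_nonneg u) ?_
  have hquad : h ^ 2 * L ^ 2 ≤ h * K := by
    rw [sq h, mul_assoc]
    exact mul_le_mul_of_nonneg_left hhK hh
  calc
    ‖u + h • v‖ ^ 2 ≤ (1 - 2 * (h * K) + h ^ 2 * L ^ 2) * ‖u‖ ^ 2 :=
      norm_add_smul_sq_le_of_inner_le hh hnorm hinner
    _ ≤ (1 - h * K) * ‖u‖ ^ 2 := by
      gcongr
      linarith

end InnerProductSpace

/-- **Lemma (one-step contraction of the deterministic Euler drift step at long range).**
If `b` is `L`-Lipschitz and `K`-contractive at distances `> R`, then for every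
`0 < h ≤ K/L²` and all `x, y` with `‖x - y‖ > R`:
`‖x - y + h (b x - b y)‖ ≤ (1 - hK/2) ‖x - y‖`. -/
theorem euler_drift_step_contraction
    {d : ℕ} (hd : 1 ≤ d) (b : EuclideanSpace ℝ (Fin d) → EuclideanSpace ℝ (Fin d))
    (L K R : ℝ) (hL : 0 < L) (hK : 0 < K) (hR : 0 < R)
    (hLip : ∀ x y : EuclideanSpace ℝ (Fin d), ‖b x - b y‖ ≤ L * ‖x - y‖)
    (hContr : ∀ x y : EuclideanSpace ℝ (Fin d), R < ‖x - y‖ →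
      @inner ℝ _ _ (x - y) (b x - b y) ≤ -K * ‖x - y‖ ^ 2)
    (h : ℝ) (hh : 0 < h) (hhK : h ≤ K / L ^ 2)
    (x y : EuclideanSpace ℝ (Fin d)) (hxy : R < ‖x - y‖) :
    ‖x - y + h • (b x - b y)‖ ≤ (1 - h * K / 2) * ‖x - y‖ := by
  have hhL : h * L ^ 2 ≤ K := (le_div_iff₀ (by positivity)).1 hhK
  exact euler_drift_step_contraction_general hh.le hhL (hLip x y) (hContr x y hxy)
end

section
/- Let d ≥ 1 and let b : ℝ^d → ℝ^d satisfy Assumptions (A). Then for all x ∈ ℝ^d: ⟨b(x), x⟩ ≤ M₂ − M₁|x|², where M₁ := K/2 and M₂ := L·(max(R, 2|b(0)|/K))² + |b(0)|·max(R, 2|b(0)|/K). -/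
/-!
Far from the origin, contractivity between `x` and `0` gives `⟪x, b x⟫ ≤ ‖x‖ ‖b 0‖ - K ‖x‖²`, and
half of the quadratic term absorbs the linear one. Near the origin the Lipschitz bound between `x`
and `0` alone is not enough, since it yields no negative quadratic term. Instead one compares `x`
with a point `c • x` further out on the same ray, where contractivity already holds: in the
direction `x` the drift at `c • x` is at most `-K c ‖x‖²`, and moving back to `x` costs at most
`L (c - 1) ‖x‖²`. If `‖x‖ ≤ m`, where `R ≤ m`, and `c • x` has norm `2 m`, this cost is
`L (2 m - ‖x‖) ‖x‖ ≤ L m²`.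
-/

open scoped NNReal RealInnerProductSpace

section

variable {E : Type*} [SeminormedAddCommGroup E] [InnerProductSpace ℝ E]

theorem real_inner_smul_left_le_mul_norm_sq_iff {c : ℝ} (hc : 0 < c) (k : ℝ) (x v : E) :
    ⟪c • x, v⟫ ≤ k * ‖c • x‖ ^ 2 ↔ ⟪x, v⟫ ≤ k * c * ‖x‖ ^ 2 := by
  have hscale : k * ‖c • x‖ ^ 2 = c * (k * c * ‖x‖ ^ 2) := by
    rw [norm_smul, Real.norm_of_nonneg hc.le]
    ring
  rw [real_inner_smul_left, hscale, mul_le_mul_iff_right₀ hc]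

theorem real_inner_le_neg_half_mul_norm_sq {K : ℝ} {x v w : E}
    (hv : ⟪x, v - w⟫ ≤ -K * ‖x‖ ^ 2) (hw : 2 * ‖w‖ ≤ K * ‖x‖) :
    ⟪v, x⟫ ≤ -(K / 2) * ‖x‖ ^ 2 := by
  have hlinear : ‖x‖ * ‖w‖ ≤ K / 2 * ‖x‖ ^ 2 :=
    calc
      ‖x‖ * ‖w‖ ≤ ‖x‖ * (K * ‖x‖ / 2) := by gcongr; linarith
      _ = K / 2 * ‖x‖ ^ 2 := by ring
  calc
    ⟪v, x⟫ = ⟪x, v - w⟫ + ⟪x, w⟫ := by rw [inner_sub_right, sub_add_cancel, real_inner_comm]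
    _ ≤ -K * ‖x‖ ^ 2 + ‖x‖ * ‖w‖ := add_le_add hv (real_inner_le_norm x w)
    _ ≤ -(K / 2) * ‖x‖ ^ 2 := by linarith

variable {b : E → E} {L : ℝ≥0} {K : ℝ}

theorem real_inner_map_sub_map_smul_le (hLip : LipschitzWith L b) (c : ℝ) (x : E) :
    ⟪x, b x - b (c • x)⟫ ≤ L * |c - 1| * ‖x‖ ^ 2 := by
  have hdist : ‖x - c • x‖ = |c - 1| * ‖x‖ := by
    rw [norm_sub_rev, ← Real.norm_eq_abs, ← norm_smul, sub_smul, one_smul]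
  calc
    ⟪x, b x - b (c • x)⟫ ≤ ‖x‖ * ‖b x - b (c • x)‖ := real_inner_le_norm _ _
    _ ≤ ‖x‖ * (L * ‖x - c • x‖) := by gcongr; exact hLip.norm_sub_le x (c • x)
    _ = L * |c - 1| * ‖x‖ ^ 2 := by rw [hdist]; ring

theorem real_inner_map_sub_le_of_smul (hLip : LipschitzWith L b) {c : ℝ} (hc : 1 ≤ c) {x v : E}
    (hcx : ⟪c • x, b (c • x) - v⟫ ≤ -K * ‖c • x‖ ^ 2) :
    ⟪x, b x - v⟫ ≤ (L * (c - 1) - K * c) * ‖x‖ ^ 2 := by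
  have hback := real_inner_map_sub_map_smul_le hLip c x
  rw [abs_of_nonneg (sub_nonneg.mpr hc)] at hback
  have hout := (real_inner_smul_left_le_mul_norm_sq_iff (zero_lt_one.trans_le hc) _ _ _).mp hcx
  calc
    ⟪x, b x - v⟫ = ⟪x, b x - b (c • x)⟫ + ⟪x, b (c • x) - v⟫ := by
      rw [← inner_add_right, sub_add_sub_cancel]
    _ ≤ L * (c - 1) * ‖x‖ ^ 2 + -K * c * ‖x‖ ^ 2 := add_le_add hback hout
    _ = (L * (c - 1) - K * c) * ‖x‖ ^ 2 := by ring

variable {R m : ℝ}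

theorem real_inner_map_self_le_of_norm_le (hLip : LipschitzWith L b) (hK : 0 ≤ K)
    (hContr : ∀ x, R < ‖x‖ → ⟪x, b x - b 0⟫ ≤ -K * ‖x‖ ^ 2) (hRm : R ≤ m) {x : E}
    (hxm : ‖x‖ ≤ m) :
    ⟪b x, x⟫ ≤ L * m ^ 2 + ‖b 0‖ * m - K * ‖x‖ ^ 2 := by
  have hm : 0 ≤ m := (norm_nonneg x).trans hxm
  obtain hx | hx_pos := (norm_nonneg x).eq_or_lt'
  · calc
      ⟪b x, x⟫ ≤ ‖b x‖ * ‖x‖ := real_inner_le_norm _ _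
      _ = 0 := by rw [hx, mul_zero]
      _ ≤ L * m ^ 2 + ‖b 0‖ * m := by positivity
      _ = L * m ^ 2 + ‖b 0‖ * m - K * ‖x‖ ^ 2 := by rw [hx]; ring
  obtain ⟨c, hc⟩ : ∃ c, c * ‖x‖ = 2 * m := ⟨2 * m / ‖x‖, div_mul_cancel₀ _ hx_pos.ne'⟩
  have hc_one : 1 ≤ c := le_of_mul_le_mul_right (by linarith) hx_pos
  have hcx : ‖c • x‖ = 2 * m := by
    rw [norm_smul, Real.norm_of_nonneg (zero_le_one.trans hc_one), hc]
  have hray : ⟪x, b x - b 0⟫ ≤ (L * (c - 1) - K * c) * ‖x‖ ^ 2 :=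
    real_inner_map_sub_le_of_smul hLip hc_one (hContr _ (by linarith))
  have hLipCost : L * ((2 * m - ‖x‖) * ‖x‖) ≤ L * m ^ 2 := by
    gcongr
    linarith [sq_nonneg (m - ‖x‖)]
  have hContrGain : K * ‖x‖ ^ 2 ≤ K * (2 * m * ‖x‖) := by
    rw [sq]
    gcongr
    linarith
  calc
    ⟪b x, x⟫ = ⟪x, b x - b 0⟫ + ⟪x, b 0⟫ := by
      rw [inner_sub_right, sub_add_cancel, real_inner_comm]
    _ ≤ (L * (c - 1) - K * c) * ‖x‖ ^ 2 + ‖x‖ * ‖b 0‖ :=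
      add_le_add hray (real_inner_le_norm _ _)
    _ = L * ((2 * m - ‖x‖) * ‖x‖) - K * (2 * m * ‖x‖) + ‖b 0‖ * ‖x‖ := by rw [← hc]; ring
    _ ≤ L * m ^ 2 - K * ‖x‖ ^ 2 + ‖b 0‖ * m := by gcongr
    _ = L * m ^ 2 + ‖b 0‖ * m - K * ‖x‖ ^ 2 := by ring

theorem contractivity_at_infinity_implies_lyapunov_general (hLip : LipschitzWith L b) (hK : 0 < K)
    (hContr : ∀ x, R < ‖x‖ → ⟪x, b x - b 0⟫ ≤ -K * ‖x‖ ^ 2) (x : E) :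
    ⟪b x, x⟫ ≤ (L * (max R (2 * ‖b 0‖ / K)) ^ 2 + ‖b 0‖ * max R (2 * ‖b 0‖ / K))
      - (K / 2) * ‖x‖ ^ 2 := by
  set m := max R (2 * ‖b 0‖ / K)
  have hRm : R ≤ m := le_max_left _ _
  have hbm : 2 * ‖b 0‖ / K ≤ m := le_max_right _ _
  have hm : 0 ≤ m := le_trans (by positivity) hbm
  obtain hxm | hmx := le_or_gt ‖x‖ m
  · have hnear := real_inner_map_self_le_of_norm_le hLip hK.le hContr hRm hxm
    have hhalf : 0 ≤ K / 2 * ‖x‖ ^ 2 := by positivity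
    linarith
  · have hfar : ⟪b x, x⟫ ≤ -(K / 2) * ‖x‖ ^ 2 :=
      real_inner_le_neg_half_mul_norm_sq (hContr x (hRm.trans_lt hmx))
        ((div_le_iff₀' hK).mp (hbm.trans hmx.le))
    have hconst : 0 ≤ L * m ^ 2 + ‖b 0‖ * m :=
      add_nonneg (by positivity) (mul_nonneg (norm_nonneg _) hm)
    linarith

end

/-- **Lemma (contractivity at infinity implies a Lyapunov drift condition).**
If `b` is `L`-Lipschitz and `K`-contractive at distances `> R`, then for all `x`:
`⟨b x, x⟩ ≤ M₂ - M₁ ‖x‖²` with `M₁ = K/2` and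
`M₂ = L (max(R, 2‖b 0‖/K))² + ‖b 0‖ max(R, 2‖b 0‖/K)`. -/
theorem contractivity_at_infinity_implies_lyapunov
    {d : ℕ} (hd : 1 ≤ d) (b : EuclideanSpace ℝ (Fin d) → EuclideanSpace ℝ (Fin d))
    (L K R : ℝ) (hL : 0 < L) (hK : 0 < K) (hR : 0 < R)
    (hLip : ∀ x y : EuclideanSpace ℝ (Fin d), ‖b x - b y‖ ≤ L * ‖x - y‖)
    (hContr : ∀ x y : EuclideanSpace ℝ (Fin d), R < ‖x - y‖ →
      @inner ℝ _ _ (x - y) (b x - b y) ≤ -K * ‖x - y‖ ^ 2)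
    (x : EuclideanSpace ℝ (Fin d)) :
    @inner ℝ _ _ (b x) x
      ≤ (L * (max R (2 * ‖b 0‖ / K)) ^ 2 + ‖b 0‖ * max R (2 * ‖b 0‖ / K))
        - (K / 2) * ‖x‖ ^ 2 := by
  lift L to ℝ≥0 using hL.le
  exact contractivity_at_infinity_implies_lyapunov_general
    (.of_dist_le_mul fun x y ↦ by simpa only [dist_eq_norm] using hLip x y) hK
    (fun x hx ↦ by simpa only [sub_zero] using hContr x 0 (by rwa [sub_zero])) x
end

section
/- Let a > 0 and r₂ > 0, and let f : [0, ∞) → [0, ∞) be defined by f(r) := (1/a)(1 − e^{−ar}) for 0 ≤ r ≤ r₂ and f(r) := (1/a)(1 − e^{−ar₂}) + (1/(2r₂))e^{−ar₂}(r² − r₂²) for r > r₂. Set A := max(a·r₂²/(1 − e^{−ar₂}), 2r₂·e^{ar₂}). Then for every r ∈ [0, ∞): r² ≤ A·f(r) and r ≤ e^{ar₂}·f(r). -/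
open scoped Classical

/-- The concave–convex distance function `f` built from parameters `a, r₂`:
`f(r) = (1/a)(1 - e^{-ar})` for `r ≤ r₂` and
`f(r) = (1/a)(1 - e^{-ar₂}) + (1/(2r₂)) e^{-ar₂} (r² - r₂²)` for `r > r₂`. -/
noncomputable def fDist (a r2 r : ℝ) : ℝ :=
  if r ≤ r2 then (1 / a) * (1 - Real.exp (-a * r))
  else (1 / a) * (1 - Real.exp (-a * r2)) + (1 / (2 * r2)) * Real.exp (-a * r2) * (r ^ 2 - r2 ^ 2)

/-! On `[0, ∞)` the function `f = fDist a r2` dominates `e^{-a r₂} h`, where `h` is the identity up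
to `r₂` and its `C¹` quadratic continuation `h(r) = (r² + r₂²) / (2 r₂)` from `r₂` on: the concave
part of `f` has slope at least `e^{-a r₂}`, and the quadratic part has exactly the slope of
`e^{-a r₂} h`. Both estimates follow from `r ≤ h(r)` (the arithmetic–geometric mean inequality
beyond `r₂`) and `r² ≤ 2 r₂ h(r)`. -/

theorem mul_exp_neg_le_one_sub_exp_neg (x : ℝ) : x * Real.exp (-x) ≤ 1 - Real.exp (-x) := by
  have h : (x + 1) * Real.exp (-x) ≤ Real.exp x * Real.exp (-x) := by
    gcongr
    exact Real.add_one_le_exp x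
  rw [← Real.exp_add, add_neg_cancel, Real.exp_zero] at h
  linarith

section

variable {a r2 r : ℝ}

theorem fDist_of_le (h : r ≤ r2) : fDist a r2 r = 1 / a * (1 - Real.exp (-a * r)) :=
  if_pos h

theorem fDist_of_ge (h : r2 ≤ r) :
    fDist a r2 r = fDist a r2 r2 + Real.exp (-a * r2) * ((r ^ 2 - r2 ^ 2) / (2 * r2)) := by
  rcases h.eq_or_lt with rfl | h
  · simp
  · rw [fDist_of_le le_rfl, fDist, if_neg h.not_ge]
    ring

theorem exp_neg_mul_le_fDist_of_le (ha : 0 < a) (hr : 0 ≤ r) (h : r ≤ r2) :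
    Real.exp (-a * r2) * r ≤ fDist a r2 r := by
  rw [fDist_of_le h, one_div_mul_eq_div, le_div_iff₀ ha]
  calc Real.exp (-a * r2) * r * a = a * r * Real.exp (-(a * r2)) := by ring_nf
    _ ≤ a * r * Real.exp (-(a * r)) := by gcongr
    _ ≤ 1 - Real.exp (-(a * r)) := mul_exp_neg_le_one_sub_exp_neg (a * r)
    _ = 1 - Real.exp (-a * r) := by rw [neg_mul]

theorem exp_neg_mul_sq_add_sq_div_le_fDist_of_ge (ha : 0 < a) (hr2 : 0 < r2) (h : r2 ≤ r) :
    Real.exp (-a * r2) * ((r ^ 2 + r2 ^ 2) / (2 * r2)) ≤ fDist a r2 r := by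
  calc Real.exp (-a * r2) * ((r ^ 2 + r2 ^ 2) / (2 * r2))
      = Real.exp (-a * r2) * r2 + Real.exp (-a * r2) * ((r ^ 2 - r2 ^ 2) / (2 * r2)) := by
        field_simp
        ring
    _ ≤ fDist a r2 r2 + Real.exp (-a * r2) * ((r ^ 2 - r2 ^ 2) / (2 * r2)) := by
        gcongr
        exact exp_neg_mul_le_fDist_of_le ha hr2.le le_rfl
    _ = fDist a r2 r := (fDist_of_ge h).symm

theorem le_exp_mul_fDist (ha : 0 < a) (hr2 : 0 < r2) (hr : 0 ≤ r) :
    r ≤ Real.exp (a * r2) * fDist a r2 r := by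
  rw [← inv_mul_le_iff₀ (Real.exp_pos _), ← Real.exp_neg, ← neg_mul]
  rcases le_total r r2 with h | h
  · exact exp_neg_mul_le_fDist_of_le ha hr h
  · have amgm : r ≤ (r ^ 2 + r2 ^ 2) / (2 * r2) := by
      rw [le_div_iff₀ (by positivity)]
      linarith [two_mul_le_add_sq r r2]
    calc Real.exp (-a * r2) * r ≤ Real.exp (-a * r2) * ((r ^ 2 + r2 ^ 2) / (2 * r2)) := by gcongr
      _ ≤ fDist a r2 r := exp_neg_mul_sq_add_sq_div_le_fDist_of_ge ha hr2 h

theorem fDist_nonneg (ha : 0 < a) (hr2 : 0 < r2) (hr : 0 ≤ r) : 0 ≤ fDist a r2 r :=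
  nonneg_of_mul_nonneg_right (hr.trans (le_exp_mul_fDist ha hr2 hr)) (Real.exp_pos _)

theorem sq_le_two_mul_exp_mul_fDist (ha : 0 < a) (hr2 : 0 < r2) (hr : 0 ≤ r) :
    r ^ 2 ≤ 2 * r2 * Real.exp (a * r2) * fDist a r2 r := by
  rw [mul_assoc, ← div_le_iff₀' (by positivity)]
  rcases le_total r r2 with h | h
  · calc r ^ 2 / (2 * r2) ≤ r := by
          rw [div_le_iff₀ (by positivity)]
          nlinarith
      _ ≤ Real.exp (a * r2) * fDist a r2 r := le_exp_mul_fDist ha hr2 hr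
  · rw [← inv_mul_le_iff₀ (Real.exp_pos _), ← Real.exp_neg, ← neg_mul]
    calc Real.exp (-a * r2) * (r ^ 2 / (2 * r2))
        ≤ Real.exp (-a * r2) * ((r ^ 2 + r2 ^ 2) / (2 * r2)) := by
          gcongr
          exact le_add_of_nonneg_right (sq_nonneg r2)
      _ ≤ fDist a r2 r := exp_neg_mul_sq_add_sq_div_le_fDist_of_ge ha hr2 h

end

/-- **Lemma (comparison of `f` with the identity and square functions).**
With `A = max(a r₂²/(1 - e^{-a r₂}), 2 r₂ e^{a r₂})`, for every `r ≥ 0`: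
`r² ≤ A f(r)` and `r ≤ e^{a r₂} f(r)`. -/
theorem fDist_comparison (a r2 : ℝ) (ha : 0 < a) (hr2 : 0 < r2) (r : ℝ) (hr : 0 ≤ r) :
    r ^ 2 ≤ max (a * r2 ^ 2 / (1 - Real.exp (-a * r2))) (2 * r2 * Real.exp (a * r2))
            * fDist a r2 r
      ∧ r ≤ Real.exp (a * r2) * fDist a r2 r := by
  refine ⟨?_, le_exp_mul_fDist ha hr2 hr⟩
  calc r ^ 2 ≤ 2 * r2 * Real.exp (a * r2) * fDist a r2 r := sq_le_two_mul_exp_mul_fDist ha hr2 hr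
    _ ≤ max (a * r2 ^ 2 / (1 - Real.exp (-a * r2))) (2 * r2 * Real.exp (a * r2))
          * fDist a r2 r := by
        gcongr
        · exact fDist_nonneg ha hr2 hr
        · exact le_max_right _ _
end
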